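/- arXiv:1608.03860 — 3 statements merged into one kernel-verified Lean document; each statement's English description precedes it below -/
import Mathlib

section
/- Let (W_n)_{n≥1} be graphons and W_0 a graphon with ‖W_n − W_0‖_□ → 0 as n → ∞. Assume the degree function of W_0 satisfies d_{W_0}(x) > 0 for almost every x ∈ [0,1]. Then the normalized kernels satisfy ‖W'_n − W'_0‖_□ → 0, and the normalized Laplacians satisfy ‖L'_{W_n} − L'_{W_0}‖_{∞→1} → 0 as n → ∞. -/
open MeasureTheory Set Filter
open scoped symmDiff

noncomputable section

/-- The unit interval `[0,1]` as a subset of `ℝ`. -/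
def I01 : Set ℝ := Set.Icc 0 1

/-- A graphon: a symmetric measurable kernel with values in `[0,1]`. -/
structure Graphon where
  W : ℝ → ℝ → ℝ
  measurable : Measurable (Function.uncurry W)
  symm : ∀ x y, W x y = W y x
  nonneg : ∀ x y, 0 ≤ W x y
  le_one : ∀ x y, W x y ≤ 1

/-- The cut norm `‖U‖_□` of a kernel `U`. -/
def cutNorm (U : ℝ → ℝ → ℝ) : ℝ :=
  sSup { r | ∃ A B : Set ℝ, MeasurableSet A ∧ MeasurableSet B ∧ A ⊆ I01 ∧ B ⊆ I01 ∧
    r = |∫ x in A, ∫ y in B, U x y| }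

/-- The degree function of a graphon: `d_W(x) = ∫₀¹ W(x,y) dy`. -/
def deg (V : Graphon) (x : ℝ) : ℝ := ∫ y in I01, V.W x y

/-- The normalized kernel `W'(x,y) = W(x,y)/√(d(x)d(y))` (and `0` where a degree vanishes). -/
def normKer (V : Graphon) (x y : ℝ) : ℝ :=
  if 0 < deg V x ∧ 0 < deg V y then V.W x y / Real.sqrt (deg V x * deg V y) else 0

/-- The normalized Laplacian `L'_W = M_{1{d>0}} − T_{W'}` applied to a function `f`. -/
def normLap (V : Graphon) (f : ℝ → ℝ) (x : ℝ) : ℝ :=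
  (if 0 < deg V x then f x else 0) - ∫ y in I01, normKer V x y * f y

/-- The `L^∞ → L¹` operator norm of a map `T` on functions:
`sup { ‖T f‖_{L¹[0,1]} : ‖f‖_∞ ≤ 1 }`. -/
def normInftyOne (T : (ℝ → ℝ) → ℝ → ℝ) : ℝ :=
  sSup { r | ∃ f : ℝ → ℝ, Measurable f ∧ (∀ x, |f x| ≤ 1) ∧ r = ∫ x in I01, |T f x| }

/-!
The cut norm is equivalent to the `L^∞ → L¹` norm of the integral operator, so cut convergence may
be read as convergence of operators. Write `W' = pWp` with `p = d^{-1/2}`, and compare it with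
`kWk` for a bounded weight `k`. The factorization `W = √W √W` and the Cauchy–Schwarz inequality give
`‖pWp - kWk‖₁ ≤ δ (2 + δ)`, where `δ = ‖1 - √d k‖₂`, although `p` is unbounded. Truncating `d₀` from
below produces a bounded `k` with `δ` small for `W₀`, by dominated convergence and `d₀ > 0` a.e.
Degrees converge in `L¹`, hence `δ` is also small for `Wₙ`, and `k(Wₙ - W₀)k` tends to `0` in
operator norm because `k` is bounded. The diagonal parts of the two Laplacians differ only on
`{dₙ = 0}`, whose measure is at most `δ²` by Markov's inequality.
-/

open Function
open scoped ENNReal Topology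

lemma sq_sqrt_sub_sqrt_le {a b : ℝ} (ha : 0 ≤ a) (hb : 0 ≤ b) : (√a - √b) ^ 2 ≤ |a - b| := by
  have hfactor : a - b = (√a - √b) * (√a + √b) := by
    linear_combination Real.sq_sqrt hb - Real.sq_sqrt ha
  rw [hfactor, abs_mul, ← sq_abs, sq]
  refine mul_le_mul_of_nonneg_left ?_ (abs_nonneg _)
  rw [abs_of_nonneg (by positivity : 0 ≤ √a + √b)]
  simpa only [abs_of_nonneg (Real.sqrt_nonneg _)] using abs_sub (√a) (√b)

lemma tendsto_add_mul_sqrt_of_tendsto_zero {ι : Type*} {l : Filter ι} {t : ι → ℝ}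
    (ht : Tendsto t l (𝓝 0)) (a K : ℝ) : Tendsto (fun i => a + K * √(t i)) l (𝓝 a) := by
  simpa using (ht.sqrt.const_mul K).const_add a

lemma tendsto_zero_of_forall_le_of_tendsto {ι κ : Type*} {l : Filter ι} {l' : Filter κ} [l'.NeBot]
    {F : ι → ℝ} {Φ : κ → ι → ℝ} {φ : κ → ℝ} (hF : ∀ i, 0 ≤ F i)
    (hFΦ : ∀ᶠ j in l', ∀ i, F i ≤ Φ j i) (hΦ : ∀ j, Tendsto (Φ j) l (𝓝 (φ j)))
    (hφ : Tendsto φ l' (𝓝 0)) : Tendsto F l (𝓝 0) := by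
  refine tendsto_order.mpr ⟨fun c hc => Eventually.of_forall fun i => hc.trans_le (hF i),
    fun c hc => ?_⟩
  obtain ⟨j, hj, hjc⟩ := (hFΦ.and (hφ.eventually_lt_const hc)).exists
  filter_upwards [(hΦ j).eventually_lt_const hjc] with i hi
  exact (hj i).trans_lt hi

lemma enorm_sqrt_mul_sq {a : ℝ} (ha : 0 ≤ a) (b : ℝ) :
    ‖√a * b‖ₑ ^ 2 = ENNReal.ofReal a * ‖b‖ₑ ^ 2 := by
  rw [enorm_mul, mul_pow, Real.enorm_of_nonneg (Real.sqrt_nonneg a),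
    ← ENNReal.ofReal_pow (Real.sqrt_nonneg a), Real.sq_sqrt ha]

lemma eLpNorm_two_sq {α E : Type*} [MeasurableSpace α] [NormedAddCommGroup E] {μ : Measure α}
    (f : α → E) : eLpNorm f 2 μ ^ 2 = ∫⁻ x, ‖f x‖ₑ ^ 2 ∂μ := by
  simpa using eLpNorm_nnreal_pow_eq_lintegral (f := f) (μ := μ) (p := 2) two_ne_zero

lemma lpNorm_two_sq {α : Type*} [MeasurableSpace α] {μ : Measure α} {f : α → ℝ}
    (hf : AEStronglyMeasurable f μ) : lpNorm f 2 μ ^ 2 = ∫ x, f x ^ 2 ∂μ := by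
  rw [← toReal_eLpNorm hf, ← ENNReal.toReal_pow, eLpNorm_two_sq,
    integral_eq_lintegral_of_nonneg_ae (Eventually.of_forall fun _ => sq_nonneg _) (hf.pow 2)]
  simp only [← enorm_pow, Real.enorm_of_nonneg (sq_nonneg _)]

section IntegralKernels

variable {α β : Type*} [MeasurableSpace α] [MeasurableSpace β] {μ : Measure α} {ν : Measure β}

lemma integral_abs_le_two_mul_of_abs_setIntegral_le {F : α → ℝ} (hF : Integrable F μ) {c : ℝ}
    (hc : ∀ A, MeasurableSet A → |∫ x in A, F x ∂μ| ≤ c) : ∫ x, |F x| ∂μ ≤ 2 * c := by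
  have hset : ∀ A, NullMeasurableSet A μ → |∫ x in A, F x ∂μ| ≤ c := by
    intro A hA
    obtain ⟨B, -, hB, hBA⟩ := hA.exists_measurable_superset_ae_eq
    rw [← setIntegral_congr_set hBA]
    exact hc B hB
  have hpos := hset {x | 0 ≤ F x} (nullMeasurableSet_le aemeasurable_const hF.aemeasurable)
  have hneg := hset {x | F x ≤ 0} (nullMeasurableSet_le hF.aemeasurable aemeasurable_const)
  calc ∫ x, |F x| ∂μ
      = ∫ x in {x | 0 ≤ F x}, F x ∂μ - ∫ x in {x | F x ≤ 0}, F x ∂μ :=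
        integral_norm_eq_pos_sub_neg hF
    _ ≤ 2 * c := by linarith [(abs_le.mp hpos).2, (abs_le.mp hneg).1]

variable {U : α → β → ℝ}

lemma integrable_uncurry_mul_snd (hU : Integrable (uncurry U) (μ.prod ν)) {f : β → ℝ}
    (hf : Measurable f) {C : ℝ} (hfC : ∀ y, |f y| ≤ C) :
    Integrable (uncurry fun x y => U x y * f y) (μ.prod ν) :=
  hU.mul_bdd (hf.comp measurable_snd).aestronglyMeasurable (Eventually.of_forall fun z => hfC z.2)

lemma abs_integral_mul_le_integral_abs {F f : β → ℝ} (hF : Integrable F ν)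
    (hfb : ∀ y, |f y| ≤ 1) : |∫ y, F y * f y ∂ν| ≤ ∫ y, |F y| ∂ν := by
  refine abs_integral_le_integral_abs.trans <| integral_mono_of_nonneg
    (Eventually.of_forall fun _ => abs_nonneg _) hF.abs (Eventually.of_forall fun y => ?_)
  simpa only [abs_mul] using mul_le_of_le_one_right (abs_nonneg (F y)) (hfb y)

variable [SFinite μ] [SFinite ν]

lemma integral_abs_integral_mul_le_integral_abs (hU : Integrable (uncurry U) (μ.prod ν))
    {f : β → ℝ} (hfb : ∀ y, |f y| ≤ 1) :
    ∫ x, |∫ y, U x y * f y ∂ν| ∂μ ≤ ∫ z, |uncurry U z| ∂μ.prod ν := by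
  rw [integral_prod _ hU.abs]
  refine integral_mono_of_nonneg (Eventually.of_forall fun _ => abs_nonneg _)
    hU.integral_norm_prod_left ?_
  filter_upwards [hU.prod_right_ae] with x hx
  exact abs_integral_mul_le_integral_abs hx hfb

-- Two rounds of splitting into positive and negative parts, one in each variable.
lemma integral_abs_integral_mul_le_four_mul (hU : Integrable (uncurry U) (μ.prod ν)) {c : ℝ}
    (hc : ∀ A B, MeasurableSet A → MeasurableSet B → |∫ x in A, ∫ y in B, U x y ∂ν ∂μ| ≤ c)
    {f : β → ℝ} (hf : Measurable f) (hfb : ∀ y, |f y| ≤ 1) :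
    ∫ x, |∫ y, U x y * f y ∂ν| ∂μ ≤ 4 * c := by
  have hUf := integrable_uncurry_mul_snd hU hf hfb
  have hrestrict (A : Set α) (B : Set β) :
      Integrable (uncurry U) ((μ.restrict A).prod (ν.restrict B)) := by
    rw [Measure.prod_restrict]
    exact hU.restrict
  have hsection (A : Set α) : Integrable (fun y => ∫ x in A, U x y ∂μ) ν := by
    simpa only [Measure.restrict_univ, uncurry_apply_pair] using
      (hrestrict A univ).integral_prod_right
  have hcolumn (A : Set α) (hA : MeasurableSet A) : ∫ y, |∫ x in A, U x y ∂μ| ∂ν ≤ 2 * c := by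
    refine integral_abs_le_two_mul_of_abs_setIntegral_le (hsection A) fun B hB => ?_
    rw [← integral_integral_swap (hrestrict A B)]
    exact hc A B hA hB
  have hrow (A : Set α) (hA : MeasurableSet A) :
      |∫ x in A, ∫ y, U x y * f y ∂ν ∂μ| ≤ 2 * c := by
    have hUfA : Integrable (uncurry fun x y => U x y * f y) ((μ.restrict A).prod ν) := by
      simpa only [Measure.restrict_univ] using
        integrable_uncurry_mul_snd (hrestrict A univ) hf hfb
    rw [integral_integral_swap hUfA]
    simp only [integral_mul_const]
    exact (abs_integral_mul_le_integral_abs (hsection A) hfb).trans (hcolumn A hA)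
  calc ∫ x, |∫ y, U x y * f y ∂ν| ∂μ
      ≤ 2 * (2 * c) :=
        integral_abs_le_two_mul_of_abs_setIntegral_le hUf.integral_prod_left hrow
    _ = 4 * c := by ring

end IntegralKernels

/-- Lebesgue measure on `[0,1]`, as a measure on `ℝ`. -/
abbrev μI : Measure ℝ := volume.restrict I01

instance isProbabilityMeasure_μI : IsProbabilityMeasure μI :=
  ⟨by simp [I01]⟩

/-- Membership of a kernel in `L¹([0,1]²)`. -/
abbrev IntegrableKernel (U : ℝ → ℝ → ℝ) : Prop := Integrable (uncurry U) (μI.prod μI)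

/-- The integral operator `T_U` on `[0,1]` with kernel `U`. -/
def kernelOp (U : ℝ → ℝ → ℝ) (f : ℝ → ℝ) (x : ℝ) : ℝ := ∫ y in I01, U x y * f y

lemma cutNorm_nonneg (U : ℝ → ℝ → ℝ) : 0 ≤ cutNorm U := by
  apply Real.sSup_nonneg
  rintro _ ⟨A, B, -, -, -, -, rfl⟩
  exact abs_nonneg _

lemma normInftyOne_nonneg (T : (ℝ → ℝ) → ℝ → ℝ) : 0 ≤ normInftyOne T := by
  apply Real.sSup_nonneg
  rintro _ ⟨f, -, -, rfl⟩
  exact integral_nonneg fun _ => abs_nonneg _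

lemma normInftyOne_le {T : (ℝ → ℝ) → ℝ → ℝ} {c : ℝ} (hc : 0 ≤ c)
    (hT : ∀ f, Measurable f → (∀ x, |f x| ≤ 1) → ∫ x in I01, |T f x| ≤ c) :
    normInftyOne T ≤ c := by
  refine Real.sSup_le ?_ hc
  rintro _ ⟨f, hf, hfb, rfl⟩
  exact hT f hf hfb

section KernelOp

variable {U V : ℝ → ℝ → ℝ} {f : ℝ → ℝ}

lemma integrable_kernelOp (hU : IntegrableKernel U) (hf : Measurable f) {C : ℝ}
    (hfC : ∀ x, |f x| ≤ C) : Integrable (kernelOp U f) μI :=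
  (integrable_uncurry_mul_snd hU hf hfC).integral_prod_left

lemma kernelOp_sub_ae_eq (hU : IntegrableKernel U)
    (hV : IntegrableKernel V) (hf : Measurable f) {C : ℝ}
    (hfC : ∀ x, |f x| ≤ C) : kernelOp (U - V) f =ᵐ[μI] kernelOp U f - kernelOp V f := by
  filter_upwards [(integrable_uncurry_mul_snd hU hf hfC).prod_right_ae,
    (integrable_uncurry_mul_snd hV hf hfC).prod_right_ae] with x hUx hVx
  simp only [kernelOp, Pi.sub_apply, sub_mul]
  exact integral_sub hUx hVx

lemma normInftyOne_kernelOp_le_integral_abs (hU : IntegrableKernel U) :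
    normInftyOne (kernelOp U) ≤ ∫ z, |uncurry U z| ∂μI.prod μI :=
  normInftyOne_le (integral_nonneg fun _ => abs_nonneg _) fun _ _ hfb =>
    integral_abs_integral_mul_le_integral_abs hU hfb

lemma integral_abs_kernelOp_le_normInftyOne (hU : IntegrableKernel U)
    (hf : Measurable f) (hfb : ∀ x, |f x| ≤ 1) :
    ∫ x in I01, |kernelOp U f x| ≤ normInftyOne (kernelOp U) := by
  refine le_csSup ⟨∫ z, |uncurry U z| ∂μI.prod μI, ?_⟩ ⟨f, hf, hfb, rfl⟩
  rintro _ ⟨g, -, hgb, rfl⟩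
  exact integral_abs_integral_mul_le_integral_abs hU hgb

lemma normInftyOne_kernelOp_sub_le (hU : IntegrableKernel U)
    (hV : IntegrableKernel V) :
    normInftyOne (kernelOp (U - V)) ≤ normInftyOne (kernelOp U) + normInftyOne (kernelOp V) := by
  refine normInftyOne_le (add_nonneg (normInftyOne_nonneg _) (normInftyOne_nonneg _))
    fun f hf hfb => ?_
  have hUf := (integrable_kernelOp hU hf hfb).abs
  have hVf := (integrable_kernelOp hV hf hfb).abs
  calc ∫ x in I01, |kernelOp (U - V) f x|
      ≤ ∫ x in I01, (|kernelOp U f x| + |kernelOp V f x|) := by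
        refine integral_mono_of_nonneg (Eventually.of_forall fun _ => abs_nonneg _)
          (hUf.add hVf) ?_
        filter_upwards [kernelOp_sub_ae_eq hU hV hf hfb] with x hx
        rw [hx]
        exact abs_sub _ _
    _ = (∫ x in I01, |kernelOp U f x|) + ∫ x in I01, |kernelOp V f x| := integral_add hUf hVf
    _ ≤ normInftyOne (kernelOp U) + normInftyOne (kernelOp V) :=
        add_le_add (integral_abs_kernelOp_le_normInftyOne hU hf hfb)
          (integral_abs_kernelOp_le_normInftyOne hV hf hfb)

lemma abs_setIntegral_setIntegral_le_normInftyOne_kernelOp (hU : IntegrableKernel U)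
    {A B : Set ℝ} (hB : MeasurableSet B) (hAI : A ⊆ I01) (hBI : B ⊆ I01) :
    |∫ x in A, ∫ y in B, U x y| ≤ normInftyOne (kernelOp U) := by
  set f : ℝ → ℝ := B.indicator 1
  have hf : Measurable f := measurable_one.indicator hB
  have hfb : ∀ x, |f x| ≤ 1 := fun x => by by_cases hx : x ∈ B <;> simp [f, hx]
  have hsection (x : ℝ) : ∫ y in B, U x y = kernelOp U f x := by
    rw [← Measure.restrict_restrict_of_subset hBI, ← integral_indicator hB]
    refine integral_congr_ae (Eventually.of_forall fun y => ?_)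
    by_cases hy : y ∈ B <;> simp [f, hy]
  calc |∫ x in A, ∫ y in B, U x y|
      ≤ ∫ x in A, |kernelOp U f x| := by
        simp only [hsection]
        exact abs_integral_le_integral_abs
    _ ≤ ∫ x in I01, |kernelOp U f x| :=
        setIntegral_mono_set (integrable_kernelOp hU hf hfb).abs
          (Eventually.of_forall fun _ => abs_nonneg _) hAI.eventuallyLE
    _ ≤ normInftyOne (kernelOp U) := integral_abs_kernelOp_le_normInftyOne hU hf hfb

lemma cutNorm_le_normInftyOne_kernelOp (hU : IntegrableKernel U) :
    cutNorm U ≤ normInftyOne (kernelOp U) := by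
  refine Real.sSup_le ?_ (normInftyOne_nonneg _)
  rintro _ ⟨A, B, -, hB, hAI, hBI, rfl⟩
  exact abs_setIntegral_setIntegral_le_normInftyOne_kernelOp hU hB hAI hBI

lemma abs_setIntegral_setIntegral_le_cutNorm (hU : IntegrableKernel U) {A B : Set ℝ}
    (hA : MeasurableSet A) (hB : MeasurableSet B) :
    |∫ x in A, ∫ y in B, U x y ∂μI ∂μI| ≤ cutNorm U := by
  rw [Measure.restrict_restrict hA, Measure.restrict_restrict hB]
  refine le_csSup ⟨normInftyOne (kernelOp U), ?_⟩ ⟨A ∩ I01, B ∩ I01, hA.inter measurableSet_Icc,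
    hB.inter measurableSet_Icc, inter_subset_right, inter_subset_right, rfl⟩
  rintro _ ⟨C, D, -, hD, hCI, hDI, rfl⟩
  exact abs_setIntegral_setIntegral_le_normInftyOne_kernelOp hU hD hCI hDI

lemma normInftyOne_kernelOp_le_four_mul_cutNorm (hU : IntegrableKernel U) :
    normInftyOne (kernelOp U) ≤ 4 * cutNorm U :=
  normInftyOne_le (mul_nonneg zero_le_four (cutNorm_nonneg U)) fun _ hf hfb =>
    integral_abs_integral_mul_le_four_mul hU
      (fun _ _ hA hB => abs_setIntegral_setIntegral_le_cutNorm hU hA hB) hf hfb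

end KernelOp

/-- The kernel `k(x) U(x,y) k(y)`, obtained from `U` by the vertex weight `k`. -/
def weightedKernel (k : ℝ → ℝ) (U : ℝ → ℝ → ℝ) (x y : ℝ) : ℝ := k x * U x y * k y

lemma weightedKernel_sub (k : ℝ → ℝ) (U V : ℝ → ℝ → ℝ) :
    weightedKernel k (U - V) = weightedKernel k U - weightedKernel k V := by
  ext x y
  simp only [weightedKernel, Pi.sub_apply]
  ring

section BoundedWeight

variable {k : ℝ → ℝ} {K : ℝ} {U : ℝ → ℝ → ℝ}

lemma integrableKernel_weightedKernel (hU : IntegrableKernel U) (hk : Measurable k)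
    (hkK : ∀ x, |k x| ≤ K) : IntegrableKernel (weightedKernel k U) :=
  (hU.bdd_mul (hk.comp measurable_fst).aestronglyMeasurable
    (Eventually.of_forall fun z => hkK z.1)).mul_bdd
    (hk.comp measurable_snd).aestronglyMeasurable (Eventually.of_forall fun z => hkK z.2)

lemma normInftyOne_kernelOp_weightedKernel_le (hU : IntegrableKernel U) (hk : Measurable k)
    (hK : 0 < K) (hkK : ∀ x, |k x| ≤ K) :
    normInftyOne (kernelOp (weightedKernel k U)) ≤ K ^ 2 * normInftyOne (kernelOp U) := by
  refine normInftyOne_le (mul_nonneg (sq_nonneg K) (normInftyOne_nonneg _)) fun f hf hfb => ?_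
  set g : ℝ → ℝ := fun y => k y / K * f y
  have hg : Measurable g := (hk.div_const K).mul hf
  have hgb : ∀ y, |g y| ≤ 1 := fun y => by
    rw [abs_mul, abs_div, abs_of_pos hK]
    exact mul_le_one₀ ((div_le_one hK).mpr (hkK y)) (abs_nonneg _) (hfb y)
  have hop (x : ℝ) : kernelOp (weightedKernel k U) f x = k x * K * kernelOp U g x := by
    simp only [kernelOp, ← integral_const_mul]
    congr with y
    simp only [weightedKernel, g]
    field_simp
  calc ∫ x in I01, |kernelOp (weightedKernel k U) f x|
      ≤ ∫ x in I01, K ^ 2 * |kernelOp U g x| := by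
        refine integral_mono_of_nonneg (Eventually.of_forall fun _ => abs_nonneg _)
          ((integrable_kernelOp hU hg hgb).abs.const_mul _) (Eventually.of_forall fun x => ?_)
        simp only [hop, abs_mul, abs_of_pos hK, sq]
        gcongr
        exact hkK x
    _ = K ^ 2 * ∫ x in I01, |kernelOp U g x| := integral_const_mul _ _
    _ ≤ K ^ 2 * normInftyOne (kernelOp U) := by
        gcongr
        exact integral_abs_kernelOp_le_normInftyOne hU hg hgb

end BoundedWeight

section Graphon

variable (V : Graphon)

lemma norm_graphon_le_one (x y : ℝ) : ‖V.W x y‖ ≤ 1 := by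
  rw [Real.norm_of_nonneg (V.nonneg x y)]
  exact V.le_one x y

lemma integrableKernel_graphon : IntegrableKernel V.W :=
  .of_bound V.measurable.aestronglyMeasurable 1 <|
    Eventually.of_forall fun z => norm_graphon_le_one V z.1 z.2

lemma measurable_graphon_section (x : ℝ) : Measurable (V.W x) :=
  V.measurable.comp measurable_prodMk_left

lemma integrable_graphon_section (x : ℝ) : Integrable (V.W x) μI :=
  .of_bound (measurable_graphon_section V x).aestronglyMeasurable 1 <|
    Eventually.of_forall (norm_graphon_le_one V x)

lemma measurable_deg : Measurable (deg V) :=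
  V.measurable.stronglyMeasurable.integral_prod_right.measurable

lemma deg_nonneg (x : ℝ) : 0 ≤ deg V x := integral_nonneg fun y => V.nonneg x y

lemma deg_le_one (x : ℝ) : deg V x ≤ 1 := by
  simpa [deg] using integral_mono (integrable_graphon_section V x) (integrable_const 1) (V.le_one x)

lemma integrable_deg : Integrable (deg V) μI := (integrableKernel_graphon V).integral_prod_left

lemma integral_abs_deg_sub_le (V₀ : Graphon) :
    ∫ x in I01, |deg V x - deg V₀ x| ≤ normInftyOne (kernelOp (V.W - V₀.W)) := by
  have hdeg (x : ℝ) : deg V x - deg V₀ x = kernelOp (V.W - V₀.W) (fun _ => 1) x := by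
    simp only [kernelOp, mul_one, Pi.sub_apply]
    exact (integral_sub (integrable_graphon_section V x) (integrable_graphon_section V₀ x)).symm
  simp only [hdeg]
  exact integral_abs_kernelOp_le_normInftyOne
    ((integrableKernel_graphon V).sub (integrableKernel_graphon V₀)) measurable_const
    fun _ => abs_one.le

/-- The weight `1/√d_W` that turns `W` into its normalized kernel. It takes the junk value `0`
where the degree vanishes, which is the value that `normKer` asks for. -/
def invSqrtDeg (x : ℝ) : ℝ := (√(deg V x))⁻¹

lemma measurable_invSqrtDeg : Measurable (invSqrtDeg V) := (measurable_deg V).sqrt.inv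

lemma normKer_eq_weightedKernel : normKer V = weightedKernel (invSqrtDeg V) V.W := by
  ext x y
  unfold normKer weightedKernel invSqrtDeg
  split_ifs with h
  · rw [Real.sqrt_mul h.1.le, div_eq_mul_inv, mul_inv]
    ring
  · rcases not_and_or.mp h with hx | hy
    · simp [Real.sqrt_eq_zero_of_nonpos (not_lt.mp hx)]
    · simp [Real.sqrt_eq_zero_of_nonpos (not_lt.mp hy)]

lemma ofReal_deg (x : ℝ) : ENNReal.ofReal (deg V x) = ∫⁻ y, ENNReal.ofReal (V.W x y) ∂μI :=
  ofReal_integral_eq_lintegral_ofReal (integrable_graphon_section V x)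
    (Eventually.of_forall (V.nonneg x))

end Graphon

/-- The norm of `p` in `L²([0,1], d_W(x) dx)`. -/
def degNorm (V : Graphon) (p : ℝ → ℝ) : ℝ≥0∞ := eLpNorm (fun x => √(deg V x) * p x) 2 μI

section DegNorm

variable (V : Graphon) {p q : ℝ → ℝ}

lemma eLpNorm_sqrt_mul_fst (hp : Measurable p) :
    eLpNorm (fun z => √(uncurry V.W z) * p z.1) 2 (μI.prod μI) = degNorm V p := by
  refine (ENNReal.pow_right_strictMono two_ne_zero).injective ?_
  simp only [degNorm, eLpNorm_two_sq, enorm_sqrt_mul_sq (V.nonneg _ _),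
    enorm_sqrt_mul_sq (deg_nonneg V _), uncurry, ofReal_deg]
  rw [lintegral_prod _ (by have := V.measurable; fun_prop)]
  refine lintegral_congr fun x => ?_
  exact lintegral_mul_const (‖p x‖ₑ ^ 2) (measurable_graphon_section V x).ennreal_ofReal

lemma eLpNorm_sqrt_mul_snd (hp : Measurable p) :
    eLpNorm (fun z => √(uncurry V.W z) * p z.2) 2 (μI.prod μI) = degNorm V p := by
  have hswap : (fun z : ℝ × ℝ => √(uncurry V.W z) * p z.2) =
      (fun z => √(uncurry V.W z) * p z.1) ∘ Prod.swap := by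
    ext z
    simp only [uncurry, comp_apply, Prod.fst_swap, Prod.snd_swap, V.symm z.1 z.2]
  rw [hswap, ← eLpNorm_sqrt_mul_fst V hp]
  exact eLpNorm_comp_measurePreserving
    (V.measurable.sqrt.mul (hp.comp measurable_fst)).aestronglyMeasurable
    Measure.measurePreserving_swap

lemma eLpNorm_mul_graphon_mul_le (hp : Measurable p) (hq : Measurable q) :
    eLpNorm (fun z : ℝ × ℝ => p z.1 * V.W z.1 z.2 * q z.2) 1 (μI.prod μI) ≤
      degNorm V p * degNorm V q := by
  have hsplit : (fun z : ℝ × ℝ => p z.1 * V.W z.1 z.2 * q z.2) =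
      (fun z => √(uncurry V.W z) * p z.1) • fun z => √(uncurry V.W z) * q z.2 := by
    ext z
    nth_rewrite 1 [← Real.mul_self_sqrt (V.nonneg z.1 z.2)]
    simp only [uncurry, Pi.smul_apply', smul_eq_mul]
    ring
  rw [hsplit, ← eLpNorm_sqrt_mul_fst V hp, ← eLpNorm_sqrt_mul_snd V hq]
  exact eLpNorm_smul_le_mul_eLpNorm
    (V.measurable.sqrt.mul (hq.comp measurable_snd)).aestronglyMeasurable
    (V.measurable.sqrt.mul (hp.comp measurable_fst)).aestronglyMeasurable

lemma eLpNorm_weightedKernel_sub_le (hp : Measurable p) (hq : Measurable q) :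
    eLpNorm (uncurry (weightedKernel p V.W - weightedKernel q V.W)) 1 (μI.prod μI) ≤
      degNorm V (p - q) * (degNorm V p + degNorm V q) := by
  have hsplit : uncurry (weightedKernel p V.W - weightedKernel q V.W) =
      (fun z => (p - q) z.1 * V.W z.1 z.2 * p z.2) +
        fun z => q z.1 * V.W z.1 z.2 * (p - q) z.2 := by
    ext z
    simp only [uncurry, weightedKernel, Pi.sub_apply, Pi.add_apply]
    ring
  have hW := V.measurable
  have hpq := hp.sub hq
  calc eLpNorm (uncurry (weightedKernel p V.W - weightedKernel q V.W)) 1 (μI.prod μI)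
      ≤ eLpNorm (fun z => (p - q) z.1 * V.W z.1 z.2 * p z.2) 1 (μI.prod μI) +
          eLpNorm (fun z => q z.1 * V.W z.1 z.2 * (p - q) z.2) 1 (μI.prod μI) := by
        rw [hsplit]
        exact eLpNorm_add_le
          (((hpq.comp measurable_fst).mul hW).mul (hp.comp measurable_snd)).aestronglyMeasurable
          (((hq.comp measurable_fst).mul hW).mul (hpq.comp measurable_snd)).aestronglyMeasurable
          le_rfl
    _ ≤ degNorm V (p - q) * degNorm V p + degNorm V q * degNorm V (p - q) :=
        add_le_add (eLpNorm_mul_graphon_mul_le V hpq hp) (eLpNorm_mul_graphon_mul_le V hq hpq)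
    _ = degNorm V (p - q) * (degNorm V p + degNorm V q) := by ring

end DegNorm

/-- The distance `‖1 - √d_W k‖` in `L²([0,1])`, which measures how well the weight `k` stands in
for `1/√d_W`. Unlike the distance of `k` from `invSqrtDeg`, it also counts the set `{d_W = 0}`. -/
def weightDefect (V : Graphon) (k : ℝ → ℝ) : ℝ := lpNorm (fun x => 1 - √(deg V x) * k x) 2 μI

section WeightDefect

variable (V V₀ : Graphon) {k : ℝ → ℝ} {K : ℝ}

lemma weightDefect_nonneg : 0 ≤ weightDefect V k := lpNorm_nonneg

lemma sqrt_deg_mul_invSqrtDeg_mem_Icc (x : ℝ) : √(deg V x) * invSqrtDeg V x ∈ Icc (0 : ℝ) 1 :=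
  ⟨by unfold invSqrtDeg; positivity, mul_inv_le_one⟩

lemma memLp_sqrt_deg_mul (hk : Measurable k) (hkK : ∀ x, |k x| ≤ K) :
    MemLp (fun x => √(deg V x) * k x) 2 μI := by
  refine .of_bound ((measurable_deg V).sqrt.mul hk).aestronglyMeasurable K <|
    Eventually.of_forall fun x => ?_
  rw [norm_mul, Real.norm_of_nonneg (Real.sqrt_nonneg _), Real.norm_eq_abs]
  exact (mul_le_of_le_one_left (abs_nonneg _) (Real.sqrt_le_one.mpr (deg_le_one V x))).trans (hkK x)

lemma memLp_one_sub_sqrt_deg_mul (hk : Measurable k) (hkK : ∀ x, |k x| ≤ K) :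
    MemLp (fun x => 1 - √(deg V x) * k x) 2 μI :=
  (memLp_const 1).sub (memLp_sqrt_deg_mul V hk hkK)

lemma ofReal_weightDefect (hk : Measurable k) (hkK : ∀ x, |k x| ≤ K) :
    ENNReal.ofReal (weightDefect V k) = eLpNorm (fun x => 1 - √(deg V x) * k x) 2 μI :=
  ofReal_lpNorm (memLp_one_sub_sqrt_deg_mul V hk hkK)

lemma degNorm_invSqrtDeg_le_one : degNorm V (invSqrtDeg V) ≤ 1 := by
  have hbound : ∀ x, ‖√(deg V x) * invSqrtDeg V x‖ ≤ 1 := fun x =>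
    (Real.norm_of_nonneg (sqrt_deg_mul_invSqrtDeg_mem_Icc V x).1).trans_le
      (sqrt_deg_mul_invSqrtDeg_mem_Icc V x).2
  simpa [degNorm] using
    eLpNorm_le_of_ae_bound (p := 2) (μ := μI) (Eventually.of_forall hbound)

lemma degNorm_le_one_add_weightDefect (hk : Measurable k) (hkK : ∀ x, |k x| ≤ K) :
    degNorm V k ≤ 1 + ENNReal.ofReal (weightDefect V k) := by
  have hsplit : (fun x => √(deg V x) * k x) = (fun _ => 1) - fun x => 1 - √(deg V x) * k x := by
    ext x
    simp
  have hone : eLpNorm (fun _ : ℝ => (1 : ℝ)) 2 μI = 1 := by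
    simpa using eLpNorm_const (1 : ℝ) two_ne_zero (NeZero.ne μI)
  rw [ofReal_weightDefect V hk hkK, degNorm, hsplit, ← hone]
  exact eLpNorm_sub_le aestronglyMeasurable_const
    (memLp_one_sub_sqrt_deg_mul V hk hkK).aestronglyMeasurable one_le_two

-- Where `d_W > 0` the two integrands agree; elsewhere the one on the left vanishes.
lemma degNorm_invSqrtDeg_sub_le (hk : Measurable k) (hkK : ∀ x, |k x| ≤ K) :
    degNorm V (invSqrtDeg V - k) ≤ ENNReal.ofReal (weightDefect V k) := by
  rw [ofReal_weightDefect V hk hkK]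
  refine eLpNorm_mono fun x => ?_
  rcases (Real.sqrt_nonneg (deg V x)).eq_or_lt with hx | hx
  · simp [← hx]
  · rw [Pi.sub_apply, invSqrtDeg, mul_sub, mul_inv_cancel₀ hx.ne']

lemma eLpNorm_normKer_sub_weightedKernel_le (hk : Measurable k) (hkK : ∀ x, |k x| ≤ K) :
    eLpNorm (uncurry (normKer V - weightedKernel k V.W)) 1 (μI.prod μI) ≤
      ENNReal.ofReal (weightDefect V k * (2 + weightDefect V k)) := by
  have hδ := weightDefect_nonneg V (k := k)
  rw [normKer_eq_weightedKernel, ENNReal.ofReal_mul hδ]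
  refine (eLpNorm_weightedKernel_sub_le V (measurable_invSqrtDeg V) hk).trans <|
    mul_le_mul' (degNorm_invSqrtDeg_sub_le V hk hkK) ?_
  calc degNorm V (invSqrtDeg V) + degNorm V k
      ≤ 1 + (1 + ENNReal.ofReal (weightDefect V k)) :=
        add_le_add (degNorm_invSqrtDeg_le_one V) (degNorm_le_one_add_weightDefect V hk hkK)
    _ = ENNReal.ofReal (2 + weightDefect V k) := by
        rw [ENNReal.ofReal_add zero_le_two hδ, ENNReal.ofReal_ofNat, ← add_assoc,
          one_add_one_eq_two]

lemma integrableKernel_normKer_sub_weightedKernel (hk : Measurable k) (hkK : ∀ x, |k x| ≤ K) :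
    IntegrableKernel (normKer V - weightedKernel k V.W) := by
  refine memLp_one_iff_integrable.mp ⟨?_, (eLpNorm_normKer_sub_weightedKernel_le V hk hkK).trans_lt
    ENNReal.ofReal_lt_top⟩
  rw [normKer_eq_weightedKernel]
  have hW := V.measurable
  have hd := measurable_invSqrtDeg V
  exact ((((hd.comp measurable_fst).mul hW).mul (hd.comp measurable_snd)).sub
    (((hk.comp measurable_fst).mul hW).mul (hk.comp measurable_snd))).aestronglyMeasurable

lemma integrableKernel_normKer : IntegrableKernel (normKer V) := by
  have h := integrableKernel_normKer_sub_weightedKernel V (k := 0) measurable_const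
    (fun _ => abs_zero.le)
  have hzero : weightedKernel 0 V.W = 0 := by
    ext x y
    simp [weightedKernel]
  rwa [hzero, sub_zero] at h

lemma normInftyOne_kernelOp_normKer_sub_weightedKernel_le (hk : Measurable k)
    (hkK : ∀ x, |k x| ≤ K) :
    normInftyOne (kernelOp (normKer V - weightedKernel k V.W)) ≤
      weightDefect V k * (2 + weightDefect V k) := by
  have hδ := weightDefect_nonneg V (k := k)
  have hint := integrableKernel_normKer_sub_weightedKernel V hk hkK
  refine (normInftyOne_kernelOp_le_integral_abs hint).trans ?_
  rw [← ENNReal.ofReal_le_ofReal_iff (by positivity)]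
  calc ENNReal.ofReal (∫ z, |uncurry (normKer V - weightedKernel k V.W) z| ∂μI.prod μI)
      = eLpNorm (uncurry (normKer V - weightedKernel k V.W)) 1 (μI.prod μI) := by
        rw [eLpNorm_one_eq_lintegral_enorm]
        exact ofReal_integral_norm_eq_lintegral_enorm hint
    _ ≤ _ := eLpNorm_normKer_sub_weightedKernel_le V hk hkK

lemma normInftyOne_kernelOp_normKer_sub_le (hk : Measurable k) (hK : 0 < K)
    (hkK : ∀ x, |k x| ≤ K) :
    normInftyOne (kernelOp (normKer V - normKer V₀)) ≤
      weightDefect V k * (2 + weightDefect V k) +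
        (weightDefect V₀ k * (2 + weightDefect V₀ k) +
          K ^ 2 * normInftyOne (kernelOp (V.W - V₀.W))) := by
  have hVV₀ : IntegrableKernel (V.W - V₀.W) :=
    (integrableKernel_graphon V).sub (integrableKernel_graphon V₀)
  have hR := integrableKernel_normKer_sub_weightedKernel V hk hkK
  have hR₀ := integrableKernel_normKer_sub_weightedKernel V₀ hk hkK
  have hD := integrableKernel_weightedKernel hVV₀ hk hkK
  have hR₀D : IntegrableKernel
      ((normKer V₀ - weightedKernel k V₀.W) - weightedKernel k (V.W - V₀.W)) := hR₀.sub hD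
  have hsplit : normKer V - normKer V₀ = (normKer V - weightedKernel k V.W) -
      ((normKer V₀ - weightedKernel k V₀.W) - weightedKernel k (V.W - V₀.W)) := by
    rw [weightedKernel_sub]
    abel
  rw [hsplit]
  refine (normInftyOne_kernelOp_sub_le hR hR₀D).trans (add_le_add
    (normInftyOne_kernelOp_normKer_sub_weightedKernel_le V hk hkK) ?_)
  exact (normInftyOne_kernelOp_sub_le hR₀ hD).trans (add_le_add
    (normInftyOne_kernelOp_normKer_sub_weightedKernel_le V₀ hk hkK)
    (normInftyOne_kernelOp_weightedKernel_le hVV₀ hk hK hkK))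

lemma lpNorm_sqrt_deg_sub_sqrt_deg_mul_le (hk : Measurable k) (hkK : ∀ x, |k x| ≤ K) :
    lpNorm (fun x => (√(deg V₀ x) - √(deg V x)) * k x) 2 μI ≤
      K * √(normInftyOne (kernelOp (V.W - V₀.W))) := by
  have hK : 0 ≤ K := (abs_nonneg _).trans (hkK 0)
  have hmeas : Measurable fun x => (√(deg V₀ x) - √(deg V x)) * k x :=
    ((measurable_deg V₀).sqrt.sub (measurable_deg V).sqrt).mul hk
  refine (pow_le_pow_iff_left₀ lpNorm_nonneg (by positivity) two_ne_zero).mp ?_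
  rw [lpNorm_two_sq hmeas.aestronglyMeasurable, mul_pow, Real.sq_sqrt (normInftyOne_nonneg _)]
  calc ∫ x in I01, ((√(deg V₀ x) - √(deg V x)) * k x) ^ 2
      ≤ ∫ x in I01, K ^ 2 * |deg V x - deg V₀ x| := by
        refine integral_mono_of_nonneg (Eventually.of_forall fun _ => sq_nonneg _)
          (((integrable_deg V).sub (integrable_deg V₀)).abs.const_mul _)
          (Eventually.of_forall fun x => ?_)
        simp only [mul_pow, mul_comm (K ^ 2)]
        refine mul_le_mul ?_ (sq_le_sq' (abs_le.mp (hkK x)).1 (abs_le.mp (hkK x)).2)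
          (sq_nonneg _) (abs_nonneg _)
        rw [abs_sub_comm]
        exact sq_sqrt_sub_sqrt_le (deg_nonneg V₀ x) (deg_nonneg V x)
    _ = K ^ 2 * ∫ x in I01, |deg V x - deg V₀ x| := integral_const_mul _ _
    _ ≤ K ^ 2 * normInftyOne (kernelOp (V.W - V₀.W)) := by
        gcongr
        exact integral_abs_deg_sub_le V V₀

lemma weightDefect_le_weightDefect_add (hk : Measurable k) (hkK : ∀ x, |k x| ≤ K) :
    weightDefect V k ≤ weightDefect V₀ k + K * √(normInftyOne (kernelOp (V.W - V₀.W))) := by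
  have hsplit : (fun x => 1 - √(deg V x) * k x) = (fun x => 1 - √(deg V₀ x) * k x) +
      fun x => (√(deg V₀ x) - √(deg V x)) * k x := by
    ext x
    simp only [Pi.add_apply]
    ring
  rw [weightDefect, hsplit]
  exact (lpNorm_add_le (memLp_one_sub_sqrt_deg_mul V₀ hk hkK) one_le_two).trans
    (add_le_add le_rfl (lpNorm_sqrt_deg_sub_sqrt_deg_mul_le V V₀ hk hkK))

lemma measureReal_deg_nonpos_le (hk : Measurable k) (hkK : ∀ x, |k x| ≤ K) :
    μI.real {x | deg V x ≤ 0} ≤ weightDefect V k ^ 2 := by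
  have hmem := memLp_one_sub_sqrt_deg_mul V hk hkK
  rw [weightDefect, lpNorm_two_sq hmem.aestronglyMeasurable]
  have hsubset : {x | deg V x ≤ 0} ⊆ {x | 1 ≤ (1 - √(deg V x) * k x) ^ 2} := fun x hx => by
    simp [Real.sqrt_eq_zero_of_nonpos hx]
  calc μI.real {x | deg V x ≤ 0}
      ≤ 1 * μI.real {x | 1 ≤ (1 - √(deg V x) * k x) ^ 2} := by
        rw [one_mul]
        exact measureReal_mono hsubset
    _ ≤ ∫ x, (1 - √(deg V x) * k x) ^ 2 ∂μI :=
        mul_meas_ge_le_integral_of_nonneg (Eventually.of_forall fun _ => sq_nonneg _)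
          hmem.integrable_sq 1

end WeightDefect

lemma normInftyOne_normLap_sub_le (V V₀ : Graphon) (hdeg : ∀ᵐ x ∂μI, 0 < deg V₀ x) :
    normInftyOne (fun f x => normLap V f x - normLap V₀ f x) ≤
      μI.real {x | deg V x ≤ 0} + normInftyOne (kernelOp (normKer V - normKer V₀)) := by
  refine normInftyOne_le (add_nonneg measureReal_nonneg (normInftyOne_nonneg _)) fun f hf hfb => ?_
  have hN := integrableKernel_normKer V
  have hN₀ := integrableKernel_normKer V₀
  have hNN₀ : IntegrableKernel (normKer V - normKer V₀) := hN.sub hN₀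
  set Z : Set ℝ := {x | deg V x ≤ 0}
  have hZ : MeasurableSet Z := measurableSet_le (measurable_deg V) measurable_const
  have hind : Integrable (Z.indicator (1 : ℝ → ℝ)) μI :=
    (integrable_const 1).indicator hZ
  have hop := (integrable_kernelOp hNN₀ hf hfb).abs
  calc ∫ x in I01, |normLap V f x - normLap V₀ f x|
      ≤ ∫ x in I01, (Z.indicator 1 x + |kernelOp (normKer V - normKer V₀) f x|) := by
        refine integral_mono_of_nonneg (Eventually.of_forall fun _ => abs_nonneg _)
          (hind.add hop) ?_
        filter_upwards [hdeg, kernelOp_sub_ae_eq hN hN₀ hf hfb] with x hx hsub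
        have hdiff : normLap V f x - normLap V₀ f x =
            ((if 0 < deg V x then f x else 0) - f x) - kernelOp (normKer V - normKer V₀) f x := by
          rw [hsub]
          simp only [Pi.sub_apply, normLap, kernelOp, if_pos hx]
          ring
        rw [hdiff]
        refine (abs_sub _ _).trans (add_le_add ?_ le_rfl)
        by_cases h : 0 < deg V x
        · simp [Z, h]
        · simpa [Z, h, not_lt.mp h] using hfb x
    _ = μI.real Z + ∫ x in I01, |kernelOp (normKer V - normKer V₀) f x| := by
        rw [integral_add hind hop, integral_indicator_one hZ]
    _ ≤ μI.real Z + normInftyOne (kernelOp (normKer V - normKer V₀)) := by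
        gcongr
        exact integral_abs_kernelOp_le_normInftyOne hNN₀ hf hfb

/-- The truncated weight `1/√(max(d_W, δ))`, a bounded stand-in for `1/√d_W` when `δ > 0`. -/
def truncWeight (V : Graphon) (δ x : ℝ) : ℝ := (√(max (deg V x) δ))⁻¹

section TruncWeight

variable (V : Graphon) {δ : ℝ}

lemma measurable_truncWeight : Measurable (truncWeight V δ) :=
  ((measurable_deg V).max measurable_const).sqrt.inv

lemma abs_truncWeight_le (hδ : 0 < δ) (x : ℝ) : |truncWeight V δ x| ≤ (√δ)⁻¹ := by
  rw [truncWeight, abs_of_nonneg (by positivity)]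
  exact inv_anti₀ (Real.sqrt_pos.mpr hδ) (Real.sqrt_le_sqrt (le_max_right _ _))

lemma one_sub_sqrt_deg_mul_truncWeight_mem_Icc (x : ℝ) :
    1 - √(deg V x) * truncWeight V δ x ∈ Icc (0 : ℝ) 1 := by
  have hle : √(deg V x) * truncWeight V δ x ≤ 1 :=
    mul_inv_le_one_of_le₀ (Real.sqrt_le_sqrt (le_max_left _ _)) (Real.sqrt_nonneg _)
  have hnonneg : 0 ≤ √(deg V x) * truncWeight V δ x := by unfold truncWeight; positivity
  exact ⟨sub_nonneg.mpr hle, sub_le_self _ hnonneg⟩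

lemma tendsto_weightDefect_truncWeight (hdeg : ∀ᵐ x ∂μI, 0 < deg V x) :
    Tendsto (fun δ => weightDefect V (truncWeight V δ)) (𝓝[>] 0) (𝓝 0) := by
  have hmeas (δ : ℝ) : AEStronglyMeasurable (fun x => 1 - √(deg V x) * truncWeight V δ x) μI :=
    (measurable_const.sub
      ((measurable_deg V).sqrt.mul (measurable_truncWeight V))).aestronglyMeasurable
  suffices hint : Tendsto (fun δ => ∫ x, (1 - √(deg V x) * truncWeight V δ x) ^ 2 ∂μI) (𝓝[>] 0)
      (𝓝 (∫ _, 0 ∂μI)) by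
    simp only [← lpNorm_two_sq (hmeas _), integral_zero] at hint
    simpa [weightDefect, Real.sqrt_sq lpNorm_nonneg] using hint.sqrt
  refine tendsto_integral_filter_of_dominated_convergence (fun _ => 1)
    (Eventually.of_forall fun δ => (hmeas δ).pow 2) (Eventually.of_forall fun δ =>
      Eventually.of_forall fun x => ?_) (integrable_const 1) ?_
  · obtain ⟨hnonneg, hle⟩ := one_sub_sqrt_deg_mul_truncWeight_mem_Icc V (δ := δ) x
    rw [Real.norm_of_nonneg (sq_nonneg _)]
    exact pow_le_one₀ hnonneg hle
  · filter_upwards [hdeg] with x hx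
    refine tendsto_const_nhds.congr' ?_
    filter_upwards [Ioo_mem_nhdsGT hx] with δ hδ
    rw [truncWeight, max_eq_left hδ.2.le, mul_inv_cancel₀ (Real.sqrt_pos.mpr hx).ne']
    norm_num

end TruncWeight

section Convergence

variable {ι : Type*} {l : Filter ι} {W : ι → Graphon} {V₀ : Graphon}

lemma tendsto_normInftyOne_kernelOp_of_tendsto_cutNorm
    (hconv : Tendsto (fun i => cutNorm ((W i).W - V₀.W)) l (𝓝 0)) :
    Tendsto (fun i => normInftyOne (kernelOp ((W i).W - V₀.W))) l (𝓝 0) := by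
  refine squeeze_zero (fun _ => normInftyOne_nonneg _) (fun i =>
    normInftyOne_kernelOp_le_four_mul_cutNorm
      ((integrableKernel_graphon (W i)).sub (integrableKernel_graphon V₀))) ?_
  simpa using hconv.const_mul 4

lemma tendsto_normInftyOne_kernelOp_normKer_sub
    (hconv : Tendsto (fun i => normInftyOne (kernelOp ((W i).W - V₀.W))) l (𝓝 0))
    (hdeg : ∀ᵐ x ∂μI, 0 < deg V₀ x) :
    Tendsto (fun i => normInftyOne (kernelOp (normKer (W i) - normKer V₀))) l (𝓝 0) := by
  set t : ι → ℝ := fun i => normInftyOne (kernelOp ((W i).W - V₀.W))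
  set e : ℝ → ℝ := fun δ => weightDefect V₀ (truncWeight V₀ δ)
  have he0 : Tendsto e (𝓝[>] 0) (𝓝 0) := tendsto_weightDefect_truncWeight V₀ hdeg
  have hlim (δ : ℝ) : Tendsto (fun i => e δ + (√δ)⁻¹ * √(t i)) l (𝓝 (e δ)) :=
    tendsto_add_mul_sqrt_of_tendsto_zero hconv (e δ) (√δ)⁻¹
  refine tendsto_zero_of_forall_le_of_tendsto (l' := 𝓝[>] 0)
    (Φ := fun δ i => (e δ + (√δ)⁻¹ * √(t i)) * (2 + (e δ + (√δ)⁻¹ * √(t i))) +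
      (e δ * (2 + e δ) + (√δ)⁻¹ ^ 2 * t i))
    (φ := fun δ => e δ * (2 + e δ) + (e δ * (2 + e δ) + (√δ)⁻¹ ^ 2 * 0))
    (fun _ => normInftyOne_nonneg _) ?_
    (fun δ => ((hlim δ).mul ((hlim δ).const_add 2)).add ((hconv.const_mul _).const_add _)) ?_
  · filter_upwards [self_mem_nhdsWithin] with δ hδ i
    have hk := measurable_truncWeight V₀ (δ := δ)
    have hkK := abs_truncWeight_le V₀ hδ
    have hW := weightDefect_le_weightDefect_add (W i) V₀ hk hkK
    have hW0 := weightDefect_nonneg (W i) (k := truncWeight V₀ δ)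
    have hWe : 0 ≤ e δ + (√δ)⁻¹ * √(t i) := hW0.trans hW
    refine (normInftyOne_kernelOp_normKer_sub_le (W i) V₀ hk
      (inv_pos.mpr (Real.sqrt_pos.mpr hδ)) hkK).trans ?_
    gcongr
  · simpa using (he0.mul (he0.const_add 2)).add (he0.mul (he0.const_add 2))

lemma tendsto_measureReal_deg_nonpos
    (hconv : Tendsto (fun i => normInftyOne (kernelOp ((W i).W - V₀.W))) l (𝓝 0))
    (hdeg : ∀ᵐ x ∂μI, 0 < deg V₀ x) :
    Tendsto (fun i => μI.real {x | deg (W i) x ≤ 0}) l (𝓝 0) := by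
  set t : ι → ℝ := fun i => normInftyOne (kernelOp ((W i).W - V₀.W))
  set e : ℝ → ℝ := fun δ => weightDefect V₀ (truncWeight V₀ δ)
  have he0 : Tendsto e (𝓝[>] 0) (𝓝 0) := tendsto_weightDefect_truncWeight V₀ hdeg
  have hlim (δ : ℝ) : Tendsto (fun i => e δ + (√δ)⁻¹ * √(t i)) l (𝓝 (e δ)) :=
    tendsto_add_mul_sqrt_of_tendsto_zero hconv (e δ) (√δ)⁻¹
  refine tendsto_zero_of_forall_le_of_tendsto (l' := 𝓝[>] 0) (fun _ => measureReal_nonneg) ?_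
    (fun δ => (hlim δ).pow 2) (by simpa using he0.pow 2)
  filter_upwards [self_mem_nhdsWithin] with δ hδ i
  have hk := measurable_truncWeight V₀ (δ := δ)
  have hkK := abs_truncWeight_le V₀ hδ
  exact (measureReal_deg_nonpos_le (W i) hk hkK).trans <| pow_le_pow_left₀
    (weightDefect_nonneg (W i)) (weightDefect_le_weightDefect_add (W i) V₀ hk hkK) 2

end Convergence

theorem normalized_laplacian_convergence_general {ι : Type*} {l : Filter ι} (W : ι → Graphon)
    (V₀ : Graphon) (hconv : Tendsto (fun i => cutNorm fun x y => (W i).W x y - V₀.W x y) l (𝓝 0))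
    (hdeg : ∀ᵐ x ∂(volume.restrict I01), 0 < deg V₀ x) :
    Tendsto (fun i => cutNorm fun x y => normKer (W i) x y - normKer V₀ x y) l (𝓝 0) ∧
    Tendsto (fun i => normInftyOne fun f x => normLap (W i) f x - normLap V₀ f x) l (𝓝 0) := by
  have hop := tendsto_normInftyOne_kernelOp_of_tendsto_cutNorm hconv
  have hker := tendsto_normInftyOne_kernelOp_normKer_sub hop hdeg
  refine ⟨squeeze_zero (fun _ => cutNorm_nonneg _) (fun i => ?_) hker,
    squeeze_zero (fun _ => normInftyOne_nonneg _)
      (fun i => normInftyOne_normLap_sub_le (W i) V₀ hdeg) ?_⟩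
  · exact cutNorm_le_normInftyOne_kernelOp
      ((integrableKernel_normKer (W i)).sub (integrableKernel_normKer V₀))
  · simpa using (tendsto_measureReal_deg_nonpos hop hdeg).add hker

/-- **Convergence of normalized Laplacians.** If `‖Wₙ − W₀‖_□ → 0` and the degree
function of `W₀` is positive almost everywhere, then the normalized kernels converge
in cut norm, and the normalized Laplacians converge in the `L^∞ → L¹` operator norm. -/
theorem normalized_laplacian_convergence
    (W : ℕ → Graphon)
    (hconv : Tendsto (fun n => cutNorm fun x y => (W n).W x y - (W 0).W x y)
      atTop (nhds 0))
    (hdeg : ∀ᵐ x ∂(volume.restrict I01), 0 < deg (W 0) x) :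
    Tendsto (fun n => cutNorm fun x y => normKer (W n) x y - normKer (W 0) x y)
      atTop (nhds 0) ∧
    Tendsto (fun n => normInftyOne fun f x => normLap (W n) f x - normLap (W 0) f x)
      atTop (nhds 0) :=
  normalized_laplacian_convergence_general W (W 0) hconv hdeg

end
end

section
/- Fix 0 < α < 1 and a finite simple graph H with a distinguished labelled vertex 1. Let 𝒟_{H,α} be the set of graphons W such that μ({y ∈ [0,1] : t_y(H,W) = α}) = 0. Let (W_n)_{n≥1} ⊆ 𝒟_{H,α} and W_0 ∈ 𝒟_{H,α} with ‖W_n − W_0‖_□ → 0. For n ≥ 0 define c_n : [0,1] → {1,2} by c_n(y) = 1 if t_y(H, W_n) < α and c_n(y) = 2 if t_y(H, W_n) ≥ α. Then μ(c_n⁻¹(1) Δ c_0⁻¹(1)) → 0 and μ(c_n⁻¹(2) Δ c_0⁻¹(2)) → 0 as n → ∞; equivalently ‖(W_n, c_n) − (W_0, c_0)‖_□^S → 0 with S = {1,2}. -/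
/-!
For measurable `A ⊆ [0,1]`, the integral `∫_A t_y(H, W) dy` is an ordinary homomorphism density with
an additional factor `1_A` at the root. Replace `W` by `W'` in it one edge at a time. Every factor
other than that of the edge `uw` being exchanged misses `u` or `w`; so, with all other coordinates
fixed, the error has the form `∫∫ f(z_u) g(z_w) (W - W')(z_u, z_w)` with `f` and `g` valued in
`[0,1]`, and is at most `‖W - W'‖_□`. This bounds `∫_A (t_y(H, W) - t_y(H, W')) dy` by
`e(H) ‖W - W'‖_□` uniformly in `A`, hence the `L¹` distance of the two densities by twice as much.
The densities therefore converge in measure, and so do their sublevel sets at any level `α` that the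
limit takes only on a null set.
-/

open MeasureTheory Set Filter
open scoped symmDiff

noncomputable section

/-- Extend an assignment `x` of values to the non-root vertices by the value `y` at the
root vertex `v₀`. -/
def extFn {V : Type*} [DecidableEq V] (v₀ : V) (y : ℝ) (x : {v : V // v ≠ v₀} → ℝ) (v : V) : ℝ :=
  if h : v = v₀ then y else x ⟨v, h⟩

/-- The `1`-labelled homomorphism density `t_y(H, W)`: the labelled vertex `v₀` is
pinned at `y`, and the coordinates of all other vertices are integrated over `[0,1]`. -/
def homDensity1 {V : Type*} [Fintype V] [DecidableEq V] (H : SimpleGraph V)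
    [DecidableRel H.Adj] (v₀ : V) (G : Graphon) (y : ℝ) : ℝ :=
  ∫ x : {v : V // v ≠ v₀} → ℝ,
    (∏ e ∈ H.edgeFinset,
      Sym2.lift ⟨fun u w => G.W (extFn v₀ y x u) (extFn v₀ y x w),
        fun _ _ => G.symm _ _⟩ e)
    ∂(Measure.pi fun _ => volume.restrict I01)

/-! ### Integrals against `[0,1]`-valued functions -/

section SetIntegralBounds

variable {X : Type*} [MeasurableSpace X] {μ : Measure X} {h : X → ℝ} {c : ℝ}

theorem integral_posPart_le_of_setIntegral_le (hh : Integrable h μ)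
    (hc : ∀ A, MeasurableSet A → ∫ x in A, h x ∂μ ≤ c) : ∫ x, (h x)⁺ ∂μ ≤ c := by
  have hpos : NullMeasurableSet {x | 0 ≤ h x} μ :=
    nullMeasurableSet_le aemeasurable_const hh.aemeasurable
  calc ∫ x, (h x)⁺ ∂μ = ∫ x, {x | 0 ≤ h x}.indicator h x ∂μ := by
        congr with x
        by_cases hx : 0 ≤ h x
        · simp [hx]
        · simp [hx, le_of_not_ge hx]
    _ = ∫ x in {x | 0 ≤ h x}, h x ∂μ := integral_indicator₀ hpos
    _ = ∫ x in toMeasurable μ {x | 0 ≤ h x}, h x ∂μ :=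
        setIntegral_congr_set hpos.toMeasurable_ae_eq.symm
    _ ≤ c := hc _ (measurableSet_toMeasurable _ _)

theorem integral_abs_le_of_abs_setIntegral_le (hh : Integrable h μ)
    (hc : ∀ A, MeasurableSet A → |∫ x in A, h x ∂μ| ≤ c) : ∫ x, |h x| ∂μ ≤ 2 * c := by
  have hpos : ∫ x, (h x)⁺ ∂μ ≤ c :=
    integral_posPart_le_of_setIntegral_le hh fun A hA => (abs_le'.1 (hc A hA)).1
  have hneg : ∫ x, (-h x)⁺ ∂μ ≤ c :=
    integral_posPart_le_of_setIntegral_le hh.neg fun A hA => by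
      simpa only [Pi.neg_apply, integral_neg] using (abs_le'.1 (hc A hA)).2
  calc ∫ x, |h x| ∂μ = ∫ x, ((h x)⁺ + (-h x)⁺) ∂μ := by
        simp only [posPart_neg, posPart_add_negPart]
    _ = ∫ x, (h x)⁺ ∂μ + ∫ x, (-h x)⁺ ∂μ := integral_add hh.pos_part hh.neg.pos_part
    _ ≤ 2 * c := by linarith

theorem integrable_mul_of_mem_Icc (hh : Integrable h μ) {f : X → ℝ}
    (hf : AEStronglyMeasurable f μ) (hf01 : ∀ x, f x ∈ Icc (0 : ℝ) 1) :
    Integrable (fun x => f x * h x) μ :=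
  hh.bdd_mul (c := 1) hf <| ae_of_all _ fun x => by
    simpa only [Real.norm_of_nonneg (hf01 x).1] using (hf01 x).2

theorem integral_mul_le_of_setIntegral_le (hh : Integrable h μ)
    (hc : ∀ A, MeasurableSet A → ∫ x in A, h x ∂μ ≤ c) {f : X → ℝ}
    (hf : AEStronglyMeasurable f μ) (hf01 : ∀ x, f x ∈ Icc (0 : ℝ) 1) :
    ∫ x, f x * h x ∂μ ≤ c := by
  have hle : ∀ x, f x * h x ≤ (h x)⁺ := fun x =>
    (mul_le_mul_of_nonneg_left (le_posPart _) (hf01 x).1).trans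
      (mul_le_of_le_one_left (posPart_nonneg _) (hf01 x).2)
  exact (integral_mono (integrable_mul_of_mem_Icc hh hf hf01) hh.pos_part hle).trans
    (integral_posPart_le_of_setIntegral_le hh hc)

theorem abs_integral_mul_le_of_abs_setIntegral_le (hh : Integrable h μ)
    (hc : ∀ A, MeasurableSet A → |∫ x in A, h x ∂μ| ≤ c) {f : X → ℝ}
    (hf : AEStronglyMeasurable f μ) (hf01 : ∀ x, f x ∈ Icc (0 : ℝ) 1) :
    |∫ x, f x * h x ∂μ| ≤ c := by
  have upper := integral_mul_le_of_setIntegral_le hh (fun A hA => (abs_le'.1 (hc A hA)).1) hf hf01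
  have lower := integral_mul_le_of_setIntegral_le hh.neg (c := c)
    (fun A hA => by simpa [integral_neg] using (abs_le'.1 (hc A hA)).2) hf hf01
  exact abs_le'.2 ⟨upper, by simpa [integral_neg] using lower⟩

end SetIntegralBounds

/-! ### Level sets under convergence in measure -/

section LevelSets

variable {X ι : Type*} {f : X → ℝ}

theorem symmDiff_setOf_lt_subset (g f : X → ℝ) (α δ : ℝ) :
    {x | g x < α} ∆ {x | f x < α} ⊆ {x | |f x - α| ≤ δ} ∪ {x | δ ≤ ‖g x - f x‖} := by
  intro x hx
  simp only [mem_symmDiff, mem_union, mem_ofPred_eq, not_lt, Real.norm_eq_abs] at hx ⊢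
  grind

variable [MeasurableSpace X] {μ : Measure X} [IsFiniteMeasure μ]

theorem tendsto_measure_abs_sub_le (hf : AEMeasurable f μ) (α : ℝ) :
    Tendsto (fun δ => μ {x | |f x - α| ≤ δ}) (nhdsWithin 0 (Ioi 0)) (nhds (μ {x | f x = α})) := by
  have hinter : ⋂ δ > (0 : ℝ), {x | |f x - α| ≤ δ} = {x | f x = α} := by
    ext x
    simp only [gt_iff_lt, mem_iInter, mem_ofPred_eq, forall_gt_imp_ge_iff_le_of_dense,
      abs_nonpos_iff, sub_eq_zero]
  rw [← hinter]
  exact tendsto_measure_biInter_gt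
    (fun δ _ => nullMeasurableSet_le (by fun_prop) aemeasurable_const)
    (fun _ _ _ hij _ hx => le_trans hx hij) ⟨1, one_pos, measure_ne_top _ _⟩

theorem tendsto_measure_symmDiff_setOf_lt {F : ι → X → ℝ} {l : Filter ι} {α : ℝ}
    (hf : AEMeasurable f μ) (hF : TendstoInMeasure μ F l f) (hα : μ {x | f x = α} = 0) :
    Tendsto (fun i => μ ({x | F i x < α} ∆ {x | f x < α})) l (nhds 0) := by
  rw [ENNReal.tendsto_nhds_zero]
  intro ε hε
  have hlevel := tendsto_measure_abs_sub_le hf α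
  rw [hα, ENNReal.tendsto_nhds_zero] at hlevel
  obtain ⟨δ, hδε, hδ⟩ :=
    ((hlevel (ε / 2) (ENNReal.half_pos hε.ne')).and self_mem_nhdsWithin).exists
  filter_upwards [ENNReal.tendsto_nhds_zero.1 (tendstoInMeasure_iff_norm.1 hF δ hδ) (ε / 2)
    (ENNReal.half_pos hε.ne')] with i hi
  calc μ ({x | F i x < α} ∆ {x | f x < α})
      ≤ μ ({x | |f x - α| ≤ δ} ∪ {x | δ ≤ ‖F i x - f x‖}) :=
        measure_mono (symmDiff_setOf_lt_subset (F i) f α δ)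
    _ ≤ ε / 2 + ε / 2 := (measure_union_le _ _).trans (add_le_add hδε hi)
    _ = ε := ENNReal.add_halves ε

end LevelSets

/-! ### Cut norm bounds -/

section CutNorm

variable {X Y : Type*} [MeasurableSpace X] [MeasurableSpace Y] {μ : Measure X} {ν : Measure Y}
  {U : X → Y → ℝ} {c : ℝ}

/-- The assertion that the cut norm of a kernel `U` on `X × Y` is at most `c`. Quantifying over
rectangles, rather than taking a supremum in `ℝ`, makes this meaningful without a bound on `U`. -/
def CutNormLE (μ : Measure X) (ν : Measure Y) (U : X → Y → ℝ) (c : ℝ) : Prop :=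
  ∀ A B, MeasurableSet A → MeasurableSet B → |∫ x in A, ∫ y in B, U x y ∂ν ∂μ| ≤ c

theorem CutNormLE.abs_integral_mul_mul_le [SFinite μ] [SFinite ν] (hc : CutNormLE μ ν U c)
    (hU : Integrable (Function.uncurry U) (μ.prod ν)) {f : X → ℝ} {g : Y → ℝ}
    (hf : Measurable f) (hg : Measurable g)
    (hf01 : ∀ x, f x ∈ Icc (0 : ℝ) 1) (hg01 : ∀ y, g y ∈ Icc (0 : ℝ) 1) :
    |∫ p : X × Y, f p.1 * g p.2 * U p.1 p.2 ∂μ.prod ν| ≤ c := by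
  have hgU : Integrable (fun p : X × Y => g p.2 * U p.1 p.2) (μ.prod ν) :=
    integrable_mul_of_mem_Icc hU (hg.comp measurable_snd).aestronglyMeasurable fun p => hg01 p.2
  have hfgU : Integrable (fun p : X × Y => f p.1 * (g p.2 * U p.1 p.2)) (μ.prod ν) :=
    integrable_mul_of_mem_Icc hgU (hf.comp measurable_fst).aestronglyMeasurable fun p => hf01 p.1
  have hsection : ∀ A, MeasurableSet A → |∫ x in A, ∫ y, g y * U x y ∂ν ∂μ| ≤ c := by
    intro A hA
    have hrestrict : ∀ B, (μ.restrict A).prod (ν.restrict B) ≤ μ.prod ν := fun B =>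
      (Measure.prod_restrict A B).trans_le Measure.restrict_le_self
    have hrestrict_left : (μ.restrict A).prod ν ≤ μ.prod ν := by simpa using hrestrict univ
    rw [integral_integral_swap (hgU.mono_measure hrestrict_left)]
    simp only [integral_const_mul]
    refine abs_integral_mul_le_of_abs_setIntegral_le
      (hU.mono_measure hrestrict_left).integral_prod_right (fun B hB => ?_)
      hg.aestronglyMeasurable hg01
    simp only [Function.uncurry_apply_pair]
    rw [← integral_integral_swap (hU.mono_measure (hrestrict B))]
    exact hc A B hA hB
  have := abs_integral_mul_le_of_abs_setIntegral_le hgU.integral_prod_left hsection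
    hf.aestronglyMeasurable hf01
  simp only [mul_assoc]
  rw [integral_prod _ hfgU]
  simpa only [integral_const_mul] using this

/-- Lebesgue measure on `[0,1]`, as a measure on `ℝ`. -/
abbrev unitMeasure : Measure ℝ := volume.restrict I01

instance isProbabilityMeasure_unitMeasure : IsProbabilityMeasure unitMeasure :=
  ⟨by simp [unitMeasure, I01]⟩

theorem measurableSet_I01 : MeasurableSet I01 := measurableSet_Icc

theorem cutNormLE_cutNorm {U : ℝ → ℝ → ℝ}
    (hU : Integrable (Function.uncurry U) (unitMeasure.prod unitMeasure)) :
    CutNormLE unitMeasure unitMeasure U (cutNorm U) := by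
  have hbdd : BddAbove {r | ∃ A B : Set ℝ, MeasurableSet A ∧ MeasurableSet B ∧ A ⊆ I01 ∧ B ⊆ I01 ∧
      r = |∫ x in A, ∫ y in B, U x y|} := by
    refine ⟨∫ p, |Function.uncurry U p| ∂unitMeasure.prod unitMeasure, ?_⟩
    rintro _ ⟨A, B, -, -, hA, hB, rfl⟩
    calc |∫ x in A, ∫ y in B, U x y|
        = |∫ p in A ×ˢ B, Function.uncurry U p ∂unitMeasure.prod unitMeasure| := by
          rw [setIntegral_prod _ hU.integrableOn, Measure.restrict_restrict_of_subset hA,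
            Measure.restrict_restrict_of_subset hB]
          rfl
      _ ≤ ∫ p in A ×ˢ B, |Function.uncurry U p| ∂unitMeasure.prod unitMeasure :=
          abs_integral_le_integral_abs
      _ ≤ ∫ p, |Function.uncurry U p| ∂unitMeasure.prod unitMeasure :=
          setIntegral_le_integral hU.abs (ae_of_all _ fun _ => abs_nonneg _)
  intro A B hA hB
  refine le_csSup hbdd ⟨A ∩ I01, B ∩ I01, hA.inter measurableSet_I01, hB.inter measurableSet_I01,
    inter_subset_right, inter_subset_right, ?_⟩
  rw [Measure.restrict_restrict hA, Measure.restrict_restrict hB]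

end CutNorm

/-! ### Product measures -/

section ProductMeasure

theorem integral_comp_of_measurePreserving {X Y : Type*} [MeasurableSpace X] [MeasurableSpace Y]
    {μ : Measure X} {ν : Measure Y} {φ : X → Y} (hφ : MeasurePreserving φ μ ν) {f : Y → ℝ}
    (hf : AEStronglyMeasurable f ν) : ∫ x, f (φ x) ∂μ = ∫ y, f y ∂ν := by
  rw [← hφ.map_eq, integral_map hφ.aemeasurable (hφ.map_eq.symm ▸ hf)]

variable {V : Type*} [Fintype V] [DecidableEq V]

theorem measurePreserving_extFn (μ : Measure ℝ) [SigmaFinite μ] (v₀ : V) :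
    MeasurePreserving (fun q : ℝ × ({v : V // v ≠ v₀} → ℝ) => extFn v₀ q.1 q.2)
      (μ.prod (Measure.pi fun _ => μ)) (Measure.pi fun _ => μ) := by
  have hmeas : Measurable fun q : ℝ × ({v : V // v ≠ v₀} → ℝ) => extFn v₀ q.1 q.2 := by
    refine measurable_pi_lambda _ fun v => ?_
    by_cases hv : v = v₀ <;> simp only [extFn, hv, dite_true, dite_false] <;> fun_prop
  refine ⟨hmeas, (Measure.pi_eq fun s hs => ?_).symm⟩
  have hpreimage : (fun q : ℝ × ({v : V // v ≠ v₀} → ℝ) => extFn v₀ q.1 q.2) ⁻¹' univ.pi s =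
      s v₀ ×ˢ univ.pi fun v : {v : V // v ≠ v₀} => s v := by
    ext ⟨y, x⟩
    simp only [mem_preimage, mem_univ_pi, mem_prod, Subtype.forall]
    rw [← and_forall_ne v₀]
    simp +contextual [extFn]
  rw [Measure.map_apply hmeas (.univ_pi hs), hpreimage, Measure.prod_prod, Measure.pi_pi,
    Fintype.prod_eq_mul_prod_subtype_ne _ v₀]

variable {X : V → Type*} [∀ v, MeasurableSpace (X v)] (μ : ∀ v, Measure (X v))
  [∀ v, IsProbabilityMeasure (μ v)]

theorem measurePreserving_update (u : V) :
    MeasurePreserving (fun q : (∀ v, X v) × X u => Function.update q.1 u q.2)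
      ((Measure.pi μ).prod (μ u)) (Measure.pi μ) := by
  have hmeas : Measurable fun q : (∀ v, X v) × X u => Function.update q.1 u q.2 :=
    measurable_update'
  refine ⟨hmeas, (Measure.pi_eq fun s hs => ?_).symm⟩
  have hpreimage : (fun q : (∀ v, X v) × X u => Function.update q.1 u q.2) ⁻¹' univ.pi s =
      univ.pi (Function.update s u univ) ×ˢ s u := by
    ext ⟨z, a⟩
    simp only [mem_preimage, mem_univ_pi, mem_prod]
    rw [Function.forall_update_iff z (p := fun v x => x ∈ s v),
      Function.forall_update_iff s (p := fun v t => z v ∈ t)]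
    simp only [mem_univ, true_and, and_comm]
  have hprod : ∏ v : {v // v ≠ u}, μ v (Function.update s u univ v) =
      ∏ v : {v // v ≠ u}, μ v (s v) :=
    Fintype.prod_congr _ _ fun v => by rw [Function.update_of_ne v.2]
  rw [Measure.map_apply hmeas (.univ_pi hs), hpreimage, Measure.prod_prod, Measure.pi_pi,
    Fintype.prod_eq_mul_prod_subtype_ne _ u, Fintype.prod_eq_mul_prod_subtype_ne _ u, hprod,
    Function.update_self, measure_univ, one_mul, mul_comm]

theorem measurePreserving_update_update (u w : V) :
    MeasurePreserving
      (fun q : (∀ v, X v) × X u × X w => Function.update (Function.update q.1 u q.2.1) w q.2.2)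
      ((Measure.pi μ).prod ((μ u).prod (μ w))) (Measure.pi μ) :=
  ((measurePreserving_update μ w).comp
    ((measurePreserving_update μ u).prod (MeasurePreserving.id (μ w)))).comp
    ((measurePreserving_prodAssoc (Measure.pi μ) (μ u) (μ w)).symm _)

end ProductMeasure

/-! ### Weights on product spaces -/

section Weights

variable {V : Type*} {X : V → Type*} [∀ v, MeasurableSpace (X v)]

/-- The `[0,1]`-valued measurable functions of the coordinates in `S`. They are the possible
cofactors of an edge factor in a homomorphism density, hence the multiplicative structure. -/
def weightsOn (X : V → Type*) [∀ v, MeasurableSpace (X v)] (S : Set V) :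
    Submonoid ((∀ v, X v) → ℝ) where
  carrier := {F | Measurable F ∧ (∀ z, F z ∈ Icc (0 : ℝ) 1) ∧ DependsOn F S}
  one_mem' := ⟨measurable_one, fun _ => by simp, fun _ _ _ => rfl⟩
  mul_mem' := fun ⟨hF, hF01, hFS⟩ ⟨hF', hF'01, hF'S⟩ =>
    ⟨hF.mul hF', fun z => unitInterval.mul_mem (hF01 z) (hF'01 z),
      fun _ _ h => congr_arg₂ (· * ·) (hFS h) (hF'S h)⟩

theorem weightsOn_mono {S T : Set V} (h : S ⊆ T) : weightsOn X S ≤ weightsOn X T :=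
  fun _ ⟨hF, hF01, hFS⟩ => ⟨hF, hF01, hFS.mono h⟩

theorem comp_eval_mem_weightsOn (v : V) {φ : X v → ℝ} (hφ : Measurable φ)
    (hφ01 : ∀ x, φ x ∈ Icc (0 : ℝ) 1) : (fun z => φ (z v)) ∈ weightsOn X {v} :=
  ⟨hφ.comp (measurable_pi_apply v), fun z => hφ01 (z v), fun _ _ h => by simp [h v rfl]⟩

theorem indicator_one_eval_mem_weightsOn (v : V) {A : Set (X v)} (hA : MeasurableSet A) :
    (fun z => A.indicator 1 (z v)) ∈ weightsOn X {v} :=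
  comp_eval_mem_weightsOn v (measurable_one.indicator hA) fun x =>
    ⟨indicator_nonneg (fun _ _ => zero_le_one) x,
      indicator_le_self' (fun _ _ => zero_le_one) x⟩

/-- The products of weights each of which ignores some endpoint of `e`: the cofactors of a kernel
at `e` for which the integral is controlled by the cut norm of that kernel. -/
def splitWeights (X : V → Type*) [∀ v, MeasurableSpace (X v)] (e : Sym2 V) :
    Submonoid ((∀ v, X v) → ℝ) :=
  ⨆ v ∈ e, weightsOn X {v}ᶜ

theorem weightsOn_le_splitWeights {S : Set V} {e : Sym2 V} {v : V} (hve : v ∈ e) (hvS : v ∉ S) :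
    weightsOn X S ≤ splitWeights X e :=
  (weightsOn_mono (subset_compl_singleton_iff.2 hvS)).trans
    (le_iSup₂ (f := fun v (_ : v ∈ e) => weightsOn X {v}ᶜ) v hve)

theorem weightsOn_singleton_le_splitWeights {e : Sym2 V} (he : ¬e.IsDiag) (v : V) :
    weightsOn X {v} ≤ splitWeights X e := by
  obtain ⟨w, hwe, hwv⟩ : ∃ w ∈ e, w ≠ v := by
    induction e with | _ a b
    by_contra! h
    exact he ((h a (Sym2.mem_mk_left a b)).trans (h b (Sym2.mem_mk_right a b)).symm)
  exact weightsOn_le_splitWeights hwe hwv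

theorem splitWeights_le_weightsOn_univ (e : Sym2 V) : splitWeights X e ≤ weightsOn X univ :=
  iSup₂_le fun _ _ => weightsOn_mono (subset_univ _)

theorem mem_splitWeights_mk {u w : V} {F : (∀ v, X v) → ℝ} :
    F ∈ splitWeights X s(u, w) ↔ ∃ P ∈ weightsOn X {w}ᶜ, ∃ Q ∈ weightsOn X {u}ᶜ, P * Q = F := by
  rw [← Submonoid.mem_sup]
  simp [splitWeights, iSup_or, iSup_sup_eq, sup_comm]

theorem exists_update_update_eq_mul_of_mem_splitWeights [DecidableEq V] {u w : V} (huw : u ≠ w)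
    {F : (∀ v, X v) → ℝ} (hF : F ∈ splitWeights X s(u, w)) (z : ∀ v, X v) :
    ∃ (f : X u → ℝ) (g : X w → ℝ), Measurable f ∧ Measurable g ∧
      (∀ a, f a ∈ Icc (0 : ℝ) 1) ∧ (∀ b, g b ∈ Icc (0 : ℝ) 1) ∧
      ∀ a b, F (Function.update (Function.update z u a) w b) = f a * g b := by
  obtain ⟨P, ⟨hP, hP01, hPw⟩, Q, ⟨hQ, hQ01, hQu⟩, rfl⟩ := mem_splitWeights_mk.1 hF
  refine ⟨fun a => P (Function.update z u a), fun b => Q (Function.update z w b),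
    hP.comp (measurable_update z), hQ.comp (measurable_update z), fun _ => hP01 _, fun _ => hQ01 _,
    fun a b => (Pi.mul_apply P Q _).trans (congr_arg₂ (· * ·) ?_ ?_)⟩
  · exact hPw fun v hv => Function.update_of_ne hv _ _
  · rw [Function.update_comm huw]
    exact hQu fun v hv => Function.update_of_ne hv _ _

variable [Fintype V] {μ : ∀ v, Measure (X v)}

theorem integrable_of_mem_weightsOn [∀ v, IsFiniteMeasure (μ v)] {S : Set V}
    {F : (∀ v, X v) → ℝ} (hF : F ∈ weightsOn X S) : Integrable F (Measure.pi μ) :=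
  Integrable.of_bound hF.1.aestronglyMeasurable 1 <| ae_of_all _ fun z => by
    simpa only [Real.norm_of_nonneg (hF.2.1 z).1] using (hF.2.1 z).2

theorem integrable_mul_sub_of_mem_weightsOn [∀ v, IsFiniteMeasure (μ v)] {S T T' : Set V}
    {F g g' : (∀ v, X v) → ℝ} (hF : F ∈ weightsOn X S) (hg : g ∈ weightsOn X T)
    (hg' : g' ∈ weightsOn X T') : Integrable (fun z => F z * (g z - g' z)) (Measure.pi μ) :=
  integrable_mul_of_mem_Icc
    ((integrable_of_mem_weightsOn hg).sub (integrable_of_mem_weightsOn hg'))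
    hF.1.aestronglyMeasurable hF.2.1

theorem CutNormLE.abs_integral_mul_le_of_mem_splitWeights [∀ v, IsProbabilityMeasure (μ v)]
    {u w : V} (huw : u ≠ w) {U : X u → X w → ℝ} {c : ℝ} (hc : CutNormLE (μ u) (μ w) U c)
    (hUm : Measurable (Function.uncurry U))
    (hU : Integrable (Function.uncurry U) ((μ u).prod (μ w)))
    {F : (∀ v, X v) → ℝ} (hF : F ∈ splitWeights X s(u, w)) :
    |∫ z, F z * U (z u) (z w) ∂Measure.pi μ| ≤ c := by
  classical
  obtain ⟨hFm, hF01, -⟩ := splitWeights_le_weightsOn_univ _ hF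
  have hresample := measurePreserving_update_update μ u w
  let r : (∀ v, X v) × X u × X w → ∀ v, X v :=
    fun q => Function.update (Function.update q.1 u q.2.1) w q.2.2
  have hsection : ∀ z, ‖∫ p : X u × X w, F (r (z, p)) * U p.1 p.2 ∂(μ u).prod (μ w)‖ ≤ c := by
    intro z
    obtain ⟨f, g, hf, hg, hf01, hg01, hfg⟩ :=
      exists_update_update_eq_mul_of_mem_splitWeights huw hF z
    simpa only [r, hfg, Real.norm_eq_abs] using hc.abs_integral_mul_mul_le hU hf hg hf01 hg01
  have hint : Integrable (fun q => F (r q) * U q.2.1 q.2.2)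
      ((Measure.pi μ).prod ((μ u).prod (μ w))) :=
    integrable_mul_of_mem_Icc (hU.comp_snd (Measure.pi μ))
      (hFm.comp hresample.measurable).aestronglyMeasurable fun q => hF01 _
  have hmeas : Measurable fun z : ∀ v, X v => F z * U (z u) (z w) :=
    hFm.mul (hUm.comp ((measurable_pi_apply u).prodMk (measurable_pi_apply w)))
  calc |∫ z, F z * U (z u) (z w) ∂Measure.pi μ|
      = |∫ q, F (r q) * U q.2.1 q.2.2 ∂(Measure.pi μ).prod ((μ u).prod (μ w))| := by
        rw [← integral_comp_of_measurePreserving hresample hmeas.aestronglyMeasurable]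
        simp [r, huw]
    _ = ‖∫ z, ∫ p, F (r (z, p)) * U p.1 p.2 ∂(μ u).prod (μ w) ∂Measure.pi μ‖ := by
        rw [integral_prod _ hint, Real.norm_eq_abs]
    _ ≤ c := by
        simpa using norm_integral_le_of_norm_le_const (μ := Measure.pi μ) (ae_of_all _ hsection)

end Weights

/-! ### The counting lemma -/

theorem mul_prod_insert_sub_prod_insert {ι R : Type*} [CommRing R] [DecidableEq ι] {s : Finset ι}
    {i : ι} (hi : i ∉ s) (r : R) (f g : ι → R) :
    r * (∏ j ∈ insert i s, f j - ∏ j ∈ insert i s, g j) =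
      (r * ∏ j ∈ s, f j) * (f i - g i) + r * g i * (∏ j ∈ s, f j - ∏ j ∈ s, g j) := by
  rw [Finset.prod_insert hi, Finset.prod_insert hi]
  ring

namespace Graphon

variable {V : Type*} (G G' : Graphon)

/-- The factor `W(z_u, z_w)` that the edge `e = uw` contributes to a homomorphism density. -/
def edgeWeight (e : Sym2 V) (z : V → ℝ) : ℝ :=
  Sym2.lift ⟨fun u w => G.W (z u) (z w), fun _ _ => G.symm _ _⟩ e

theorem edgeWeight_mk (u w : V) : G.edgeWeight s(u, w) = fun z => G.W (z u) (z w) := rfl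

theorem edgeWeight_mem_weightsOn (e : Sym2 V) :
    G.edgeWeight e ∈ weightsOn (fun _ => ℝ) {v | v ∈ e} := by
  induction e with | _ u w
  rw [edgeWeight_mk]
  have hpair : Measurable fun z : V → ℝ => (z u, z w) := by fun_prop
  refine ⟨G.measurable.comp hpair, fun z => ⟨G.nonneg _ _, G.le_one _ _⟩, fun z z' h => ?_⟩
  simp only [h u (Sym2.mem_mk_left u w), h w (Sym2.mem_mk_right u w)]

theorem prod_edgeWeight_mem_weightsOn_univ (E : Finset (Sym2 V)) :
    (fun z => ∏ e ∈ E, G.edgeWeight e z) ∈ weightsOn (fun _ => ℝ) univ := by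
  simpa only [Finset.prod_fn] using
    prod_mem fun e _ => weightsOn_mono (subset_univ _) (G.edgeWeight_mem_weightsOn e)

theorem edgeWeight_mem_splitWeights {e e' : Sym2 V} (he : ¬e.IsDiag) (hne : e' ≠ e) :
    G.edgeWeight e' ∈ splitWeights (fun _ => ℝ) e := by
  obtain ⟨v, hve, hve'⟩ : ∃ v ∈ e, v ∉ e' := by
    induction e with | _ u w
    by_contra! h
    exact hne ((Sym2.mem_and_mem_iff he).1 ⟨h u (Sym2.mem_mk_left u w),
      h w (Sym2.mem_mk_right u w)⟩)
  exact weightsOn_le_splitWeights hve hve' (G.edgeWeight_mem_weightsOn e')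

theorem measurable_sub : Measurable (Function.uncurry fun x y => G.W x y - G'.W x y) :=
  G.measurable.sub G'.measurable

theorem integrable_sub (μ : Measure (ℝ × ℝ)) [IsFiniteMeasure μ] :
    Integrable (Function.uncurry fun x y => G.W x y - G'.W x y) μ :=
  Integrable.of_bound (G.measurable_sub G').aestronglyMeasurable 1 <| ae_of_all _ fun p => by
    simpa only [Real.norm_eq_abs, Function.uncurry_def, sub_zero] using
      abs_sub_le_of_le_of_le (G.nonneg _ _) (G.le_one _ _) (G'.nonneg _ _) (G'.le_one _ _)

variable {G G'} [Fintype V] {μ : Measure ℝ} [IsProbabilityMeasure μ] {c : ℝ}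

theorem abs_integral_mul_edgeWeight_sub_le (hc : CutNormLE μ μ (fun x y => G.W x y - G'.W x y) c)
    {e : Sym2 V} (he : ¬e.IsDiag) {F : (V → ℝ) → ℝ} (hF : F ∈ splitWeights (fun _ => ℝ) e) :
    |∫ z, F z * (G.edgeWeight e z - G'.edgeWeight e z) ∂Measure.pi fun _ => μ| ≤ c := by
  induction e with | _ u w
  exact hc.abs_integral_mul_le_of_mem_splitWeights (μ := fun _ => μ) he (G.measurable_sub G')
    (G.integrable_sub G' _) hF

theorem abs_integral_mul_prod_edgeWeight_sub_le
    (hc : CutNormLE μ μ (fun x y => G.W x y - G'.W x y) c) (E : Finset (Sym2 V))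
    (hE : ∀ e ∈ E, ¬e.IsDiag) {F : (V → ℝ) → ℝ}
    (hF : ∀ e ∈ E, F ∈ splitWeights (fun _ => ℝ) e) :
    |∫ z, F z * (∏ e ∈ E, G.edgeWeight e z - ∏ e ∈ E, G'.edgeWeight e z)
      ∂Measure.pi fun _ => μ| ≤ E.card * c := by
  classical
  induction E using Finset.induction_on generalizing F with
  | empty => simp
  | insert e E heE ih =>
    rw [Finset.forall_mem_insert] at hE hF
    have hne : ∀ e' ∈ E, e' ≠ e := fun e' he' => ne_of_mem_of_not_mem he' heE
    let A : (V → ℝ) → ℝ := fun z => ∏ e' ∈ E, G.edgeWeight e' z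
    have hFA : F * A ∈ splitWeights (fun _ => ℝ) e := by
      simpa only [A, Finset.prod_fn] using mul_mem hF.1
        (prod_mem fun e' he' => G.edgeWeight_mem_splitWeights hE.1 (hne e' he'))
    have hFe : ∀ e' ∈ E, F * G'.edgeWeight e ∈ splitWeights (fun _ => ℝ) e' := fun e' he' =>
      mul_mem (hF.2 e' he') (G'.edgeWeight_mem_splitWeights (hE.2 e' he') (hne e' he').symm)
    have hFA_int := integrable_mul_sub_of_mem_weightsOn (μ := fun _ : V => μ)
      (splitWeights_le_weightsOn_univ e hFA) (G.edgeWeight_mem_weightsOn e)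
      (G'.edgeWeight_mem_weightsOn e)
    have hFe_int := integrable_mul_sub_of_mem_weightsOn (μ := fun _ : V => μ)
      (mul_mem (splitWeights_le_weightsOn_univ e hF.1)
        (weightsOn_mono (subset_univ _) (G'.edgeWeight_mem_weightsOn e)))
      (G.prod_edgeWeight_mem_weightsOn_univ E) (G'.prod_edgeWeight_mem_weightsOn_univ E)
    simp only [mul_prod_insert_sub_prod_insert heE]
    rw [Finset.card_insert_of_notMem heE, Nat.cast_add_one]
    calc _ = _ := congr_arg abs (integral_add hFA_int hFe_int)
      _ ≤ _ := abs_add_le _ _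
      _ ≤ c + E.card * c :=
        add_le_add (abs_integral_mul_edgeWeight_sub_le hc hE.1 hFA) (ih hE.2 hFe)
      _ = (E.card + 1) * c := by ring

end Graphon

/-! ### Stability of rooted homomorphism densities -/

section HomDensity

variable {V : Type*} [Fintype V] [DecidableEq V] (H : SimpleGraph V) [DecidableRel H.Adj] (v₀ : V)
  (G G' : Graphon)

theorem homDensity1_eq_integral_edgeWeight (y : ℝ) :
    homDensity1 H v₀ G y =
      ∫ x, ∏ e ∈ H.edgeFinset, G.edgeWeight e (extFn v₀ y x) ∂Measure.pi fun _ => unitMeasure :=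
  rfl

theorem integrable_homDensity1 : Integrable (homDensity1 H v₀ G) unitMeasure :=
  ((measurePreserving_extFn unitMeasure v₀).integrable_comp_of_integrable
    (integrable_of_mem_weightsOn
      (G.prod_edgeWeight_mem_weightsOn_univ H.edgeFinset))).integral_prod_left

theorem setIntegral_homDensity1 {A : Set ℝ} (hA : MeasurableSet A) :
    ∫ y in A, homDensity1 H v₀ G y ∂unitMeasure =
      ∫ z, A.indicator 1 (z v₀) * ∏ e ∈ H.edgeFinset, G.edgeWeight e z
        ∂Measure.pi fun _ => unitMeasure := by
  have hweight : (fun z : V → ℝ => A.indicator 1 (z v₀) * ∏ e ∈ H.edgeFinset, G.edgeWeight e z) ∈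
      weightsOn (fun _ => ℝ) univ :=
    mul_mem (weightsOn_mono (subset_univ _) (indicator_one_eval_mem_weightsOn v₀ hA))
      (G.prod_edgeWeight_mem_weightsOn_univ H.edgeFinset)
  have hext := measurePreserving_extFn unitMeasure v₀
  have hint := hext.integrable_comp_of_integrable (integrable_of_mem_weightsOn hweight)
  simp only [Function.comp_def] at hint
  rw [← integral_comp_of_measurePreserving hext hweight.1.aestronglyMeasurable,
    integral_prod _ hint, ← integral_indicator hA]
  congr with y
  by_cases hy : y ∈ A <;> simp [extFn, hy, homDensity1_eq_integral_edgeWeight]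

theorem abs_setIntegral_homDensity1_sub_le {A : Set ℝ} (hA : MeasurableSet A) :
    |∫ y in A, (homDensity1 H v₀ G y - homDensity1 H v₀ G' y) ∂unitMeasure| ≤
      H.edgeFinset.card * cutNorm fun x y => G.W x y - G'.W x y := by
  have hindicator := indicator_one_eval_mem_weightsOn (X := fun _ : V => ℝ) v₀ hA
  have hint : ∀ K : Graphon, Integrable
      (fun z => A.indicator 1 (z v₀) * ∏ e ∈ H.edgeFinset, K.edgeWeight e z)
      (Measure.pi fun _ => unitMeasure) := fun K =>
    integrable_mul_of_mem_Icc
      (integrable_of_mem_weightsOn (K.prod_edgeWeight_mem_weightsOn_univ H.edgeFinset))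
      hindicator.1.aestronglyMeasurable hindicator.2.1
  have hnondiag : ∀ e ∈ H.edgeFinset, ¬e.IsDiag := fun e he =>
    H.not_isDiag_of_mem_edgeFinset he
  rw [integral_sub (integrable_homDensity1 H v₀ G).integrableOn
    (integrable_homDensity1 H v₀ G').integrableOn, setIntegral_homDensity1 H v₀ G hA,
    setIntegral_homDensity1 H v₀ G' hA, ← integral_sub (hint G) (hint G')]
  simp only [← mul_sub]
  exact Graphon.abs_integral_mul_prod_edgeWeight_sub_le
    (cutNormLE_cutNorm (G.integrable_sub G' _)) H.edgeFinset hnondiag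
    fun e he => weightsOn_singleton_le_splitWeights (hnondiag e he) v₀ hindicator

theorem integral_abs_homDensity1_sub_le :
    ∫ y, |homDensity1 H v₀ G y - homDensity1 H v₀ G' y| ∂unitMeasure ≤
      2 * (H.edgeFinset.card * cutNorm fun x y => G.W x y - G'.W x y) :=
  integral_abs_le_of_abs_setIntegral_le
    ((integrable_homDensity1 H v₀ G).sub (integrable_homDensity1 H v₀ G'))
    fun _ => abs_setIntegral_homDensity1_sub_le H v₀ G G'

theorem tendstoInMeasure_homDensity1 {ι : Type*} {l : Filter ι} {W : ι → Graphon} {G₀ : Graphon}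
    (hconv : Tendsto (fun i => cutNorm fun x y => (W i).W x y - G₀.W x y) l (nhds 0)) :
    TendstoInMeasure unitMeasure (fun i => homDensity1 H v₀ (W i)) l (homDensity1 H v₀ G₀) := by
  have hint : ∀ i, Integrable (homDensity1 H v₀ (W i) - homDensity1 H v₀ G₀) unitMeasure :=
    fun i => (integrable_homDensity1 H v₀ (W i)).sub (integrable_homDensity1 H v₀ G₀)
  have hL1 : Tendsto (fun i => ∫ y, |homDensity1 H v₀ (W i) y - homDensity1 H v₀ G₀ y| ∂unitMeasure)
      l (nhds 0) := by
    refine squeeze_zero (fun i => integral_nonneg fun y => abs_nonneg _)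
      (fun i => integral_abs_homDensity1_sub_le H v₀ (W i) G₀) ?_
    simpa using (hconv.const_mul (H.edgeFinset.card : ℝ)).const_mul 2
  refine tendstoInMeasure_of_tendsto_eLpNorm one_ne_zero
    (fun i => (integrable_homDensity1 H v₀ (W i)).aestronglyMeasurable)
    (integrable_homDensity1 H v₀ G₀).aestronglyMeasurable ?_
  simp only [eLpNorm_one_eq_lintegral_enorm, ← ofReal_integral_norm_eq_lintegral_enorm (hint _)]
  simpa using ENNReal.tendsto_ofReal hL1

end HomDensity

/-! ### Consistency of clustering -/

theorem unitMeasure_apply (A : Set ℝ) : unitMeasure A = volume (I01 ∩ A) := by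
  rw [unitMeasure, Measure.restrict_apply' measurableSet_I01, inter_comm]

theorem volume_symmDiff_sep_I01 (p q : ℝ → Prop) :
    volume ({y ∈ I01 | p y} ∆ {y ∈ I01 | q y}) = unitMeasure ({y | p y} ∆ {y | q y}) := by
  rw [unitMeasure_apply, inter_symmDiff_distrib_left]
  rfl

theorem homDensity_clustering_consistent_general
    {V ι : Type*} [Fintype V] [DecidableEq V] (H : SimpleGraph V) [DecidableRel H.Adj] (v₀ : V)
    (α : ℝ) {l : Filter ι} (W : ι → Graphon) (G₀ : Graphon)
    (hG₀ : volume {y ∈ I01 | homDensity1 H v₀ G₀ y = α} = 0)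
    (hconv : Tendsto (fun i => cutNorm fun x y => (W i).W x y - G₀.W x y) l (nhds 0)) :
    Tendsto (fun i =>
        (volume ({y ∈ I01 | homDensity1 H v₀ (W i) y < α} ∆
          {y ∈ I01 | homDensity1 H v₀ G₀ y < α})).toReal) l (nhds 0) ∧
    Tendsto (fun i =>
        (volume ({y ∈ I01 | α ≤ homDensity1 H v₀ (W i) y} ∆
          {y ∈ I01 | α ≤ homDensity1 H v₀ G₀ y})).toReal) l (nhds 0) := by
  have hcompl : ∀ G, {y | α ≤ homDensity1 H v₀ G y} = {y | homDensity1 H v₀ G y < α}ᶜ := fun G => by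
    simp only [compl_ofPred, not_lt]
  have hlevel : unitMeasure {y | homDensity1 H v₀ G₀ y = α} = 0 :=
    (unitMeasure_apply _).trans hG₀
  have hlim := tendsto_measure_symmDiff_setOf_lt (integrable_homDensity1 H v₀ G₀).aemeasurable
    (tendstoInMeasure_homDensity1 H v₀ hconv) hlevel
  simp only [volume_symmDiff_sep_I01, hcompl, compl_symmDiff_compl, and_self]
  exact (ENNReal.tendsto_toReal ENNReal.zero_ne_top).comp hlim

/-- **Structural consistency of clustering by a `1`-labelled homomorphism density.**
Fix `0 < α < 1` and a `1`-labelled graph `(H, v₀)`.  Suppose all graphons `W n`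
(with `W 0` the limit) lie in `𝒟_{H,α}`, i.e. `{y : t_y(H, W n) = α}` is a null set,
and `‖W n − W 0‖_□ → 0`.  Coloring `y` by `1` if `t_y(H, W n) < α` and by `2`
otherwise, the color classes converge:
`μ(c_n⁻¹(1) Δ c_0⁻¹(1)) → 0` and `μ(c_n⁻¹(2) Δ c_0⁻¹(2)) → 0`. -/
theorem homDensity_clustering_consistent
    {V : Type*} [Fintype V] [DecidableEq V] (H : SimpleGraph V)
    [DecidableRel H.Adj] (v₀ : V) (α : ℝ) (hα0 : 0 < α) (hα1 : α < 1)
    (W : ℕ → Graphon)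
    (hD : ∀ n, volume {y ∈ I01 | homDensity1 H v₀ (W n) y = α} = 0)
    (hconv : Tendsto (fun n => cutNorm fun x y => (W n).W x y - (W 0).W x y)
      atTop (nhds 0)) :
    Tendsto (fun n =>
        (volume (({y ∈ I01 | homDensity1 H v₀ (W n) y < α}) ∆
          ({y ∈ I01 | homDensity1 H v₀ (W 0) y < α}))).toReal) atTop (nhds 0) ∧
    Tendsto (fun n =>
        (volume (({y ∈ I01 | α ≤ homDensity1 H v₀ (W n) y}) ∆
          ({y ∈ I01 | α ≤ homDensity1 H v₀ (W 0) y}))).toReal) atTop (nhds 0) := by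
  exact homDensity_clustering_consistent_general H v₀ α W (W 0) (hD 0) hconv

end
end

section
/- Fix a finite simple graph H, graphons W_e and W'_e for every edge e ∈ E(H), and measurable subsets F_v ⊆ [0,1] for every vertex v ∈ V(H). Define the generalized homomorphism density t_F(H, W) := ∫_{×_{v∈V(H)} F_v} ∏_{e∈E(H)} W_e(x_{e_s}, x_{e_t}) ∏_{v∈V(H)} dx_v, and similarly t_F(H, W') with W'_e in place of W_e. Then |t_F(H, W) − t_F(H, W')| ≤ Σ_{e∈E(H)} (∏_{v ≠ e_s, e_t} μ(F_v)) · min{ μ(F_{e_s}) μ(F_{e_t}), ‖W_e − W'_e‖_□ }, where μ is Lebesgue measure. -/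
/-!
The kernels are replaced one edge at a time, and each replacement is charged to its edge. Changing
the kernel of `e = uw` by `U` changes the density by the integral of `U(x_u, x_w) P(x)`, where `P`
is the product over the other edges. Both densities being integrals of `[0,1]`-valued functions,
this is at most `∏_v μ(F_v)`. For the cut-norm bound, fix all coordinates but `x_u` and `x_w`: as no
other edge contains both `u` and `w`, `P` becomes a product `f(x_u) g(x_w)` with `f` and `g` valued
in `[0,1]`. Multiplying `U` by such weights does not increase its cut norm, because `∫ f h` with
`0 ≤ f ≤ 1` is extremal when `f` is the indicator function of `{h ≥ 0}` or of `{h ≤ 0}`.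
-/

open MeasureTheory Set Filter

noncomputable section

/-- The generalized homomorphism density of a graph `H`, a family of graphons `Wf e`
indexed by the edges of `H`, and sets `F v ⊆ [0,1]` indexed by the vertices:
`t_F(H, W) = ∫_{×_v F_v} ∏_{e ∈ E(H)} W_e(x_{e_s}, x_{e_t}) ∏_v dx_v`. -/
def tGen {V : Type*} [Fintype V] [DecidableEq V] (H : SimpleGraph V)
    [DecidableRel H.Adj] (Wf : Sym2 V → Graphon) (F : V → Set ℝ) : ℝ :=
  ∫ x : V → ℝ,
    (∏ e ∈ H.edgeFinset,
      Sym2.lift ⟨fun u w => (Wf e).W (x u) (x w), fun _ _ => (Wf e).symm _ _⟩ e)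
    ∂(Measure.pi fun v => volume.restrict (F v))

/-- A measurable `[0,1]`-valued function. On `Sym2 α`, with its quotient σ-algebra, this is the same
as a symmetric measurable `[0,1]`-valued kernel on `α × α`, that is, a graphon over `α`. -/
structure IsUnitWeight {α : Type*} [MeasurableSpace α] (f : α → ℝ) : Prop where
  measurable : Measurable f
  nonneg : ∀ x, 0 ≤ f x
  le_one : ∀ x, f x ≤ 1

namespace IsUnitWeight

variable {α β : Type*} [MeasurableSpace α] [MeasurableSpace β] {f g : α → ℝ}

lemma comp (hf : IsUnitWeight f) {φ : β → α} (hφ : Measurable φ) :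
    IsUnitWeight fun x => f (φ x) :=
  ⟨hf.measurable.comp hφ, fun _ => hf.nonneg _, fun _ => hf.le_one _⟩

lemma prod {ι : Type*} {E : Finset ι} {f : ι → α → ℝ} (hf : ∀ i ∈ E, IsUnitWeight (f i)) :
    IsUnitWeight fun x => ∏ i ∈ E, f i x where
  measurable := Finset.measurable_fun_prod _ fun i hi => (hf i hi).measurable
  nonneg x := Finset.prod_nonneg fun i hi => (hf i hi).nonneg x
  le_one x := Finset.prod_le_one (fun i hi => (hf i hi).nonneg x) fun i hi => (hf i hi).le_one x

lemma norm_le_one (hf : IsUnitWeight f) (x : α) : ‖f x‖ ≤ 1 := by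
  rw [Real.norm_of_nonneg (hf.nonneg x)]
  exact hf.le_one x

lemma norm_sub_le_one (hf : IsUnitWeight f) (hg : IsUnitWeight g) (x : α) : ‖f x - g x‖ ≤ 1 :=
  abs_sub_le_of_nonneg_of_le (hf.nonneg x) (hf.le_one x) (hg.nonneg x) (hg.le_one x)

lemma integrable (hf : IsUnitWeight f) (μ : Measure α) [IsFiniteMeasure μ] : Integrable f μ :=
  .of_bound hf.measurable.aestronglyMeasurable 1 (ae_of_all _ hf.norm_le_one)

lemma integrable_mul (hf : IsUnitWeight f) {μ : Measure α} {h : α → ℝ} (hh : Integrable h μ) :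
    Integrable (fun x => f x * h x) μ :=
  hh.bdd_mul hf.measurable.aestronglyMeasurable (ae_of_all _ hf.norm_le_one)

-- `∫ f h` is largest, among weights `f`, for the indicator function of `{0 ≤ h}`.
lemma integral_mul_le_of_setIntegral_le (hf : IsUnitWeight f) {μ : Measure α} {h : α → ℝ} {c : ℝ}
    (hh : Integrable h μ) (hc : ∀ S, MeasurableSet S → ∫ x in S, h x ∂μ ≤ c) :
    ∫ x, f x * h x ∂μ ≤ c := by
  have hpos : NullMeasurableSet {x | 0 ≤ h x} μ :=
    nullMeasurableSet_le aemeasurable_const hh.aemeasurable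
  obtain ⟨S, -, hS, hS_ae⟩ := hpos.exists_measurable_superset_ae_eq
  calc ∫ x, f x * h x ∂μ
      ≤ ∫ x, {x | 0 ≤ h x}.indicator h x ∂μ := by
        refine integral_mono (hf.integrable_mul hh) (hh.indicator₀ hpos) fun x => ?_
        by_cases hx : x ∈ {x | 0 ≤ h x}
        · simpa only [indicator_of_mem hx] using mul_le_of_le_one_left hx (hf.le_one x)
        · simpa only [indicator_of_notMem hx] using
            mul_nonpos_of_nonneg_of_nonpos (hf.nonneg x) (not_le.mp hx).le
    _ = ∫ x in S, h x ∂μ := by rw [integral_indicator₀ hpos, setIntegral_congr_set hS_ae]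
    _ ≤ c := hc S hS

lemma abs_integral_mul_le_of_abs_setIntegral_le (hf : IsUnitWeight f) {μ : Measure α} {h : α → ℝ}
    {c : ℝ} (hh : Integrable h μ) (hc : ∀ S, MeasurableSet S → |∫ x in S, h x ∂μ| ≤ c) :
    |∫ x, f x * h x ∂μ| ≤ c := by
  refine abs_le'.mpr ⟨hf.integral_mul_le_of_setIntegral_le hh fun S hS => (le_abs_self _).trans
    (hc S hS), ?_⟩
  have hneg := hf.integral_mul_le_of_setIntegral_le hh.neg fun S hS => by
    simpa only [Pi.neg_apply, integral_neg] using (neg_le_abs _).trans (hc S hS)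
  simpa only [Pi.neg_apply, mul_neg, integral_neg] using hneg

end IsUnitWeight

/-- `c` bounds the integral of `U` over every measurable rectangle, that is, the cut norm of `U`
with respect to `μ` and `ν` is at most `c`. -/
def IsCutBound {α β : Type*} [MeasurableSpace α] [MeasurableSpace β] (μ : Measure α)
    (ν : Measure β) (U : α → β → ℝ) (c : ℝ) : Prop :=
  ∀ A B, MeasurableSet A → MeasurableSet B → |∫ x in A, ∫ y in B, U x y ∂ν ∂μ| ≤ c

section CutBound

variable {α β : Type*} [MeasurableSpace α] [MeasurableSpace β] {μ : Measure α} {ν : Measure β}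
  [SFinite μ] [SFinite ν]

lemma integrable_restrict_prod_restrict {h : α × β → ℝ} (hh : Integrable h (μ.prod ν))
    (A : Set α) (B : Set β) : Integrable h ((μ.restrict A).prod (ν.restrict B)) := by
  rw [Measure.prod_restrict]
  exact hh.restrict

namespace IsCutBound

variable {U : α → β → ℝ} {c : ℝ}

lemma swap (hc : IsCutBound μ ν U c) (hU : Integrable (Function.uncurry U) (μ.prod ν)) :
    IsCutBound ν μ (fun y x => U x y) c := by
  intro B A hB hA
  rw [← integral_integral_swap (integrable_restrict_prod_restrict hU A B)]
  exact hc A B hA hB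

lemma mul_left (hc : IsCutBound μ ν U c) (hU : Integrable (Function.uncurry U) (μ.prod ν))
    {f : α → ℝ} (hf : IsUnitWeight f) : IsCutBound μ ν (fun x y => f x * U x y) c := by
  intro A B hA hB
  simp only [integral_const_mul]
  refine hf.abs_integral_mul_le_of_abs_setIntegral_le
    (integrable_restrict_prod_restrict hU A B).integral_prod_left fun S hS => ?_
  rw [Measure.restrict_restrict hS]
  exact hc (S ∩ A) B (hS.inter hA) hB

lemma mul_mul (hc : IsCutBound μ ν U c) (hU : Integrable (Function.uncurry U) (μ.prod ν))
    {f : α → ℝ} {g : β → ℝ} (hf : IsUnitWeight f) (hg : IsUnitWeight g) :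
    IsCutBound μ ν (fun x y => f x * (g y * U x y)) c := by
  have hgU : Integrable (fun p : α × β => g p.2 * U p.1 p.2) (μ.prod ν) :=
    (hg.comp measurable_snd).integrable_mul hU
  exact (((hc.swap hU).mul_left hU.swap hg).swap hgU.swap).mul_left hgU hf

lemma abs_integral_prod_le (hc : IsCutBound μ ν U c)
    (hU : Integrable (Function.uncurry U) (μ.prod ν)) :
    |∫ p, U p.1 p.2 ∂μ.prod ν| ≤ c := by
  rw [integral_prod (fun p : α × β => U p.1 p.2) hU]
  simpa only [Measure.restrict_univ] using hc univ univ .univ .univ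

end IsCutBound

end CutBound

lemma measureReal_pi_univ {ι : Type*} [Fintype ι] {α : ι → Type*} [∀ i, MeasurableSpace (α i)]
    (μ : ∀ i, Measure (α i)) [∀ i, SigmaFinite (μ i)] :
    (Measure.pi μ).real univ = ∏ i, (μ i).real univ := by
  simp only [measureReal_def, Measure.pi_univ, ENNReal.toReal_prod]

section SplitTwoCoordinates

variable {V α : Type*} [DecidableEq V]

/-- The point of `V → α` with coordinates `p.1` at `u`, `p.2` at `w`, and `z` elsewhere: the inverse
of splitting off the coordinates `u` and `w`. -/
def glue (u w : V) (p : α × α) (z : {v // v ∉ s(u, w)} → α) (v : V) : α :=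
  if h : v ∈ s(u, w) then if v = u then p.1 else p.2 else z ⟨v, h⟩

variable {u w : V} {p : α × α} {z : {v // v ∉ s(u, w)} → α}

lemma glue_left : glue u w p z u = p.1 := by simp [glue]

lemma glue_right (huw : u ≠ w) : glue u w p z w = p.2 := by simp [glue, huw.symm]

lemma glue_of_notMem {v : V} (hv : v ∉ s(u, w)) : glue u w p z v = z ⟨v, hv⟩ := dif_neg hv

lemma glue_congr_left {a b b' : α} {v : V} (hv : v ≠ w) :
    glue u w (a, b) z v = glue u w (a, b') z v := by
  grind [glue]

lemma glue_congr_right {a a' b : α} {v : V} (hv : v ≠ u) :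
    glue u w (a, b) z v = glue u w (a', b) z v := by
  grind [glue]

lemma glue_mem_univ_pi_iff (huw : u ≠ w) {s : V → Set α} :
    glue u w p z ∈ univ.pi s ↔ (p.1 ∈ s u ∧ p.2 ∈ s w) ∧ ∀ v : {v // v ∉ s(u, w)}, z v ∈ s v := by
  grind [glue]

variable [MeasurableSpace α]

lemma measurable_uncurry_glue :
    Measurable (Function.uncurry (glue (α := α) u w)) := by
  refine measurable_pi_lambda _ fun v => ?_
  by_cases hv : v ∈ s(u, w)
  · rcases eq_or_ne v u with rfl | hvu
    · simp only [Function.uncurry_def, glue_left]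
      fun_prop
    · simp only [Function.uncurry_def, glue, dif_pos hv, if_neg hvu]
      fun_prop
  · simp only [Function.uncurry_def, glue_of_notMem hv]
    fun_prop

-- With the other coordinates fixed, `f` is a function of `x u` alone and `g` one of `x w` alone.
lemma IsCutBound.norm_integral_glue_le {μ ν : Measure α} [SFinite μ] [SFinite ν] {U : α → α → ℝ}
    {c : ℝ} (hc : IsCutBound μ ν U c) (hU : Integrable (Function.uncurry U) (μ.prod ν))
    {f g : (V → α) → ℝ} (hf : IsUnitWeight f) (hg : IsUnitWeight g) (hfw : DependsOn f {w}ᶜ)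
    (hgu : DependsOn g {u}ᶜ) (z : {v // v ∉ s(u, w)} → α) :
    ‖∫ p, f (glue u w p z) * (g (glue u w p z) * U p.1 p.2) ∂μ.prod ν‖ ≤ c := by
  have hf_fiber (p : α × α) : f (glue u w p z) = f (glue u w (p.1, p.1) z) :=
    hfw fun v hv => glue_congr_left hv
  have hg_fiber (p : α × α) : g (glue u w p z) = g (glue u w (p.2, p.2) z) :=
    hgu fun v hv => glue_congr_right hv
  have hdiag : Measurable fun a : α => glue u w (a, a) z :=
    measurable_uncurry_glue.comp (by fun_prop : Measurable fun a : α => ((a, a), z))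
  simp only [hf_fiber, hg_fiber]
  exact (hc.mul_mul hU (hf.comp hdiag) (hg.comp hdiag)).abs_integral_prod_le
    (((hf.comp hdiag).comp measurable_fst).integrable_mul
      (((hg.comp hdiag).comp measurable_snd).integrable_mul hU))

variable [Fintype V] (μ : V → Measure α)

lemma measurePreserving_uncurry_glue [∀ v, SigmaFinite (μ v)] (huw : u ≠ w) :
    MeasurePreserving (Function.uncurry (glue u w))
      (((μ u).prod (μ w)).prod (Measure.pi fun v : {v // v ∉ s(u, w)} => μ v))
      (Measure.pi μ) := by
  refine ⟨measurable_uncurry_glue, (Measure.pi_eq fun s hs => ?_).symm⟩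
  have hpreimage : Function.uncurry (glue u w) ⁻¹' univ.pi s =
      (s u ×ˢ s w) ×ˢ univ.pi fun v : {v // v ∉ s(u, w)} => s v := by
    ext ⟨p, z⟩
    simpa only [mem_preimage, Function.uncurry_apply_pair, mem_prod, mem_univ_pi] using
      glue_mem_univ_pi_iff huw
  have hpair : Finset.univ.filter (· ∈ s(u, w)) = {u, w} := by ext; simp
  rw [Measure.map_apply measurable_uncurry_glue (.univ_pi hs), hpreimage, Measure.prod_prod,
    Measure.prod_prod, Measure.pi_pi,
    ← Finset.prod_filter_mul_prod_filter_not Finset.univ (· ∈ s(u, w)), hpair,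
    Finset.prod_pair huw, Finset.prod_subtype _ (p := (· ∉ s(u, w))) (by simp)]

variable [∀ v, IsFiniteMeasure (μ v)]

lemma IsCutBound.abs_integral_pi_le {U : α → α → ℝ} {c : ℝ} (huw : u ≠ w)
    (hc : IsCutBound (μ u) (μ w) U c) (hU_meas : Measurable (Function.uncurry U))
    (hU : Integrable (Function.uncurry U) ((μ u).prod (μ w))) {f g : (V → α) → ℝ}
    (hf : IsUnitWeight f) (hg : IsUnitWeight g) (hfw : DependsOn f {w}ᶜ) (hgu : DependsOn g {u}ᶜ) :
    |∫ x, f x * (g x * U (x u) (x w)) ∂Measure.pi μ| ≤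
      (∏ v with v ∉ s(u, w), (μ v).real univ) * c := by
  have hΦ_meas : Measurable fun x : V → α => f x * (g x * U (x u) (x w)) :=
    hf.measurable.mul (hg.measurable.mul (hU_meas.comp (by fun_prop :
      Measurable fun x : V → α => (x u, x w))))
  have hΦ_int : Integrable (fun q : (α × α) × ({v // v ∉ s(u, w)} → α) =>
      f (glue u w q.1 q.2) * (g (glue u w q.1 q.2) * U q.1.1 q.1.2))
      (((μ u).prod (μ w)).prod (Measure.pi fun v : {v // v ∉ s(u, w)} => μ v)) :=
    (hf.comp measurable_uncurry_glue).integrable_mul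
      ((hg.comp measurable_uncurry_glue).integrable_mul (hU.comp_fst _))
  rw [← (measurePreserving_uncurry_glue μ huw).map_eq,
    integral_map measurable_uncurry_glue.aemeasurable hΦ_meas.aestronglyMeasurable]
  simp only [Function.uncurry_def, glue_left, glue_right huw]
  rw [integral_prod_symm _ hΦ_int]
  refine (norm_integral_le_of_norm_le_const (ae_of_all _
    (hc.norm_integral_glue_le hU hf hg hfw hgu))).trans_eq ?_
  rw [mul_comm, measureReal_pi_univ, Finset.prod_subtype _ (p := (· ∉ s(u, w))) (by simp)]

end SplitTwoCoordinates

lemma prod_update_sub_prod {ι β : Type*} [DecidableEq ι] (k : ι → β → ℝ) (κ : β → ℝ)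
    {E : Finset ι} {j : ι} (hj : j ∈ E) (y : ι → β) :
    (∏ i ∈ E, Function.update k j κ i (y i)) - ∏ i ∈ E, k i (y i) =
      (∏ i ∈ E.erase j, k i (y i)) * (κ (y j) - k j (y j)) := by
  have hrest : ∏ i ∈ E.erase j, Function.update k j κ i (y i) = ∏ i ∈ E.erase j, k i (y i) :=
    Finset.prod_congr rfl fun i hi => by rw [Function.update_of_ne (Finset.ne_of_mem_erase hi)]
  rw [← Finset.prod_erase_mul _ _ hj, ← Finset.prod_erase_mul E (fun i => k i (y i)) hj, hrest,
    Function.update_self, mul_sub]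

section HomDensity

variable {V α : Type*}

lemma dependsOn_prod_map (k : Sym2 V → Sym2 α → ℝ) {E : Finset (Sym2 V)} {v : V}
    (hE : ∀ e ∈ E, v ∉ e) : DependsOn (fun x : V → α => ∏ e ∈ E, k e (e.map x)) {v}ᶜ :=
  fun _ _ hxy => Finset.prod_congr rfl fun e he => congrArg (k e) <| Sym2.map_congr fun i hi =>
    hxy i (ne_of_mem_of_not_mem hi (hE e he))

variable [MeasurableSpace α]

lemma measurable_from_sym2 {β : Type*} [MeasurableSpace β] {f : Sym2 α → β}
    (hf : Measurable fun p : α × α => f s(p.1, p.2)) : Measurable f :=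
  fun _ ht => hf ht

lemma measurable_sym2_mk : Measurable fun p : α × α => s(p.1, p.2) := measurable_quot_mk

lemma measurable_sym2_map (e : Sym2 V) : Measurable fun x : V → α => e.map x := by
  induction e with
  | h u w =>
    exact measurable_sym2_mk.comp (by fun_prop : Measurable fun x : V → α => (x u, x w))

lemma IsUnitWeight.prod_map {k : Sym2 V → Sym2 α → ℝ} (hk : ∀ e, IsUnitWeight (k e))
    (E : Finset (Sym2 V)) : IsUnitWeight fun x : V → α => ∏ e ∈ E, k e (e.map x) :=
  .prod fun e _ => (hk e).comp (measurable_sym2_map e)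

variable [Fintype V] (H : SimpleGraph V) [DecidableRel H.Adj]

/-- The homomorphism density of `H` with respect to symmetric kernels `k e` on the edges and
measures `μ v` on the vertices. A symmetric kernel on `α` is encoded as a function on `Sym2 α`, so
that `k e (e.map x)` is the factor of the edge `e`. -/
def homDensity (k : Sym2 V → Sym2 α → ℝ) (μ : V → Measure α) : ℝ :=
  ∫ x, ∏ e ∈ H.edgeFinset, k e (e.map x) ∂Measure.pi μ

variable {H} {k k' : Sym2 V → Sym2 α → ℝ} (μ : V → Measure α)

lemma homDensity_congr (h : ∀ e ∈ H.edgeFinset, k e = k' e) :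
    homDensity H k μ = homDensity H k' μ := by
  unfold homDensity
  congr 1 with x
  exact Finset.prod_congr rfl fun e he => by rw [h e he]

variable [∀ v, IsFiniteMeasure (μ v)]

lemma homDensity_sub_homDensity (hk : ∀ e, IsUnitWeight (k e)) (hk' : ∀ e, IsUnitWeight (k' e)) :
    homDensity H k μ - homDensity H k' μ =
      ∫ x, (∏ e ∈ H.edgeFinset, k e (e.map x)) - ∏ e ∈ H.edgeFinset, k' e (e.map x)
        ∂Measure.pi μ :=
  (integral_sub ((IsUnitWeight.prod_map hk _).integrable _)
    ((IsUnitWeight.prod_map hk' _).integrable _)).symm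

lemma abs_homDensity_sub_le_prod (hk : ∀ e, IsUnitWeight (k e)) (hk' : ∀ e, IsUnitWeight (k' e)) :
    |homDensity H k μ - homDensity H k' μ| ≤ ∏ v, (μ v).real univ := by
  rw [homDensity_sub_homDensity μ hk hk', ← measureReal_pi_univ, ← one_mul (Measure.real _ _)]
  exact norm_integral_le_of_norm_le_const
    (ae_of_all _ ((IsUnitWeight.prod_map hk _).norm_sub_le_one (.prod_map hk' _)))

variable [DecidableEq V]

-- Since `uw` is not in `E`, no edge in `E` contains both `u` and `w`, so that the product over `E`
-- splits into a factor independent of `x w` and one independent of `x u`.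
lemma IsCutBound.abs_integral_prod_map_mul_le {u w : V} (huw : u ≠ w) {U : α → α → ℝ} {c : ℝ}
    (hc : IsCutBound (μ u) (μ w) U c) (hU_meas : Measurable (Function.uncurry U))
    (hU : Integrable (Function.uncurry U) ((μ u).prod (μ w))) {k : Sym2 V → Sym2 α → ℝ}
    (hk : ∀ e, IsUnitWeight (k e)) {E : Finset (Sym2 V)} (hE : s(u, w) ∉ E) :
    |∫ x, (∏ e ∈ E, k e (e.map x)) * U (x u) (x w) ∂Measure.pi μ| ≤
      (∏ v with v ∉ s(u, w), (μ v).real univ) * c := by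
  have hw : ∀ e ∈ E.filter (w ∉ ·), w ∉ e := fun e he => (Finset.mem_filter.mp he).2
  have hu : ∀ e ∈ E.filter (¬w ∉ ·), u ∉ e := fun e he hue => by
    obtain ⟨heE, hwe⟩ := Finset.mem_filter.mp he
    exact hE ((Sym2.mem_and_mem_iff huw).mp ⟨hue, not_not.mp hwe⟩ ▸ heE)
  simp only [← Finset.prod_filter_mul_prod_filter_not E (w ∉ ·), mul_assoc]
  exact hc.abs_integral_pi_le μ huw hU_meas hU (.prod_map hk _) (.prod_map hk _)
    (dependsOn_prod_map k hw) (dependsOn_prod_map k hu)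

lemma abs_homDensity_update_sub_le {u w : V} (huw : H.Adj u w) {κ : Sym2 α → ℝ} {c : ℝ}
    (hk : ∀ e, IsUnitWeight (k e)) (hκ : IsUnitWeight κ)
    (hc : IsCutBound (μ u) (μ w) (fun x y => κ s(x, y) - k s(u, w) s(x, y)) c) :
    |homDensity H (Function.update k s(u, w) κ) μ - homDensity H k μ| ≤
      (∏ v with v ∉ s(u, w), (μ v).real univ) *
        min (∏ v with v ∈ s(u, w), (μ v).real univ) c := by
  have hupdate : ∀ e, IsUnitWeight (Function.update k s(u, w) κ e) :=
    Function.forall_update_iff k (fun _ f => IsUnitWeight f) |>.mpr ⟨hκ, fun e _ => hk e⟩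
  rw [mul_min_of_nonneg _ _ (by positivity)]
  refine le_min ?_ ?_
  · rw [mul_comm, Finset.prod_filter_mul_prod_filter_not]
    exact abs_homDensity_sub_le_prod μ hupdate hk
  · have huw_mem : s(u, w) ∈ H.edgeFinset := SimpleGraph.mem_edgeFinset.mpr huw
    rw [homDensity_sub_homDensity μ hupdate hk]
    simp only [prod_update_sub_prod k κ huw_mem, Sym2.map_mk]
    exact hc.abs_integral_prod_map_mul_le μ huw.ne
      ((hκ.comp measurable_sym2_mk).measurable.sub ((hk _).comp measurable_sym2_mk).measurable)
      (((hκ.comp measurable_sym2_mk).integrable _).sub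
        (((hk _).comp measurable_sym2_mk).integrable _))
      hk (Finset.notMem_erase _ _)

end HomDensity

lemma abs_piecewise_sub_le_sum {ι : Type*} [DecidableEq ι] {β : ι → Type*} (T : (∀ i, β i) → ℝ)
    (f g : ∀ i, β i) {b : ι → ℝ} (E : Finset ι)
    (hstep : ∀ S : Finset ι, ∀ i ∈ E, i ∉ S →
      |T (Function.update (S.piecewise f g) i (f i)) - T (S.piecewise f g)| ≤ b i) :
    |T (E.piecewise f g) - T g| ≤ ∑ i ∈ E, b i := by
  induction E using Finset.induction_on with
  | empty => simp
  | insert i S hi ih =>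
    rw [Finset.sum_insert hi, Finset.piecewise_insert]
    exact (abs_sub_le _ _ _).trans (add_le_add (hstep S i (Finset.mem_insert_self i S) hi)
      (ih fun S' j hj => hstep S' j (Finset.mem_insert_of_mem hj)))

theorem generalized_counting_lemma_general {V α : Type*} [Fintype V] [DecidableEq V]
    [MeasurableSpace α] (H : SimpleGraph V) [DecidableRel H.Adj] (μ : V → Measure α)
    [∀ v, IsFiniteMeasure (μ v)] {k k' : Sym2 V → Sym2 α → ℝ} (hk : ∀ e, IsUnitWeight (k e))
    (hk' : ∀ e, IsUnitWeight (k' e)) {c : Sym2 V → ℝ}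
    (hc : ∀ u w, H.Adj u w → IsCutBound (μ u) (μ w)
      (fun x y => k s(u, w) s(x, y) - k' s(u, w) s(x, y)) (c s(u, w))) :
    |homDensity H k μ - homDensity H k' μ| ≤
      ∑ e ∈ H.edgeFinset, (∏ v with v ∉ e, (μ v).real univ) *
        min (∏ v with v ∈ e, (μ v).real univ) (c e) := by
  have hhybrid (S : Finset (Sym2 V)) (e : Sym2 V) : IsUnitWeight (S.piecewise k k' e) :=
    S.piecewise_cases k k' IsUnitWeight (hk e) (hk' e)
  rw [homDensity_congr μ fun e he => (H.edgeFinset.piecewise_eq_of_mem k k' he).symm]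
  refine abs_piecewise_sub_le_sum (homDensity H · μ) k k' H.edgeFinset fun S e he heS => ?_
  induction e with
  | h u w =>
    have huw : H.Adj u w := SimpleGraph.mem_edgeFinset.mp he
    refine abs_homDensity_update_sub_le μ huw (hhybrid S) (hk _) ?_
    rw [S.piecewise_eq_of_notMem k k' heS]
    exact hc u w huw

lemma volume_real_le_one_of_subset_I01 {A : Set ℝ} (hA : A ⊆ I01) : volume.real A ≤ 1 := by
  simpa [I01] using measureReal_mono (μ := volume) hA (by simp [I01])

lemma volume_lt_top_of_subset_I01 {A : Set ℝ} (hA : A ⊆ I01) : volume A < ⊤ :=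
  (measure_mono hA).trans_lt (by simp [I01])

lemma norm_setIntegral_le_of_subset_I01 {A : Set ℝ} (hA : A ⊆ I01) {f : ℝ → ℝ} {M : ℝ}
    (hf : ∀ x, ‖f x‖ ≤ M) : ‖∫ x in A, f x‖ ≤ M :=
  (norm_setIntegral_le_of_norm_le_const (volume_lt_top_of_subset_I01 hA) fun x _ => hf x).trans
    (mul_le_of_le_one_right ((norm_nonneg _).trans (hf 0)) (volume_real_le_one_of_subset_I01 hA))

lemma isCutBound_restrict_cutNorm {U : ℝ → ℝ → ℝ} {M : ℝ} (hU : ∀ x y, ‖U x y‖ ≤ M) {F G : Set ℝ}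
    (hF : MeasurableSet F) (hG : MeasurableSet G) (hFI : F ⊆ I01) (hGI : G ⊆ I01) :
    IsCutBound (volume.restrict F) (volume.restrict G) U (cutNorm U) := by
  intro A B hA hB
  rw [Measure.restrict_restrict hA, Measure.restrict_restrict hB]
  refine le_csSup ⟨M, ?_⟩ ⟨A ∩ F, B ∩ G, hA.inter hF, hB.inter hG, inter_subset_right.trans hFI,
    inter_subset_right.trans hGI, rfl⟩
  rintro _ ⟨A, B, -, -, hAI, hBI, rfl⟩
  exact norm_setIntegral_le_of_subset_I01 hAI fun x => norm_setIntegral_le_of_subset_I01 hBI (hU x)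

/-- A graphon as a function on unordered pairs, the encoding of symmetric kernels used by
`homDensity`. -/
def Graphon.toSym2 (G : Graphon) : Sym2 ℝ → ℝ := Sym2.lift ⟨G.W, G.symm⟩

lemma Graphon.isUnitWeight_toSym2 (G : Graphon) : IsUnitWeight G.toSym2 where
  measurable := measurable_from_sym2 G.measurable
  nonneg := Sym2.ind G.nonneg
  le_one := Sym2.ind G.le_one

lemma Graphon.isCutBound_sub_cutNorm (G G' : Graphon) {A B : Set ℝ} (hA : MeasurableSet A)
    (hB : MeasurableSet B) (hAI : A ⊆ I01) (hBI : B ⊆ I01) :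
    IsCutBound (volume.restrict A) (volume.restrict B) (fun x y => G.W x y - G'.W x y)
      (cutNorm fun x y => G.W x y - G'.W x y) :=
  isCutBound_restrict_cutNorm
    (fun x y => G.isUnitWeight_toSym2.norm_sub_le_one G'.isUnitWeight_toSym2 s(x, y)) hA hB hAI hBI

lemma tGen_eq_homDensity {V : Type*} [Fintype V] [DecidableEq V] (H : SimpleGraph V)
    [DecidableRel H.Adj] (Wf : Sym2 V → Graphon) (F : V → Set ℝ) :
    tGen H Wf F = homDensity H (fun e => (Wf e).toSym2) fun v => volume.restrict (F v) := by
  unfold tGen homDensity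
  congr 1 with x
  refine Finset.prod_congr rfl fun e _ => ?_
  induction e with
  | h u w => rfl

/-- **Generalized Counting Lemma.** For a finite simple graph `H`, families of graphons
`W_e`, `W'_e` indexed by the edges, and measurable sets `F_v ⊆ [0,1]` indexed by the
vertices:
`|t_F(H,W) − t_F(H,W')| ≤ Σ_{e ∈ E(H)} (∏_{v ∉ e} μ(F_v)) · min{∏_{v ∈ e} μ(F_v), ‖W_e − W'_e‖_□}`. -/
theorem generalized_counting_lemma
    {V : Type*} [Fintype V] [DecidableEq V] (H : SimpleGraph V)
    [DecidableRel H.Adj] (Wf Wf' : Sym2 V → Graphon) (F : V → Set ℝ)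
    (hFmeas : ∀ v, MeasurableSet (F v)) (hFsub : ∀ v, F v ⊆ I01) :
    |tGen H Wf F - tGen H Wf' F|
      ≤ ∑ e ∈ H.edgeFinset,
          (∏ v ∈ Finset.univ.filter (fun v => v ∉ e), (volume (F v)).toReal) *
            min (∏ v ∈ Finset.univ.filter (fun v => v ∈ e), (volume (F v)).toReal)
              (cutNorm fun x y => (Wf e).W x y - (Wf' e).W x y) := by
  have (v : V) : IsFiniteMeasure (volume.restrict (F v)) :=
    isFiniteMeasure_restrict.mpr (volume_lt_top_of_subset_I01 (hFsub v)).ne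
  simpa only [tGen_eq_homDensity, measureReal_def, Measure.restrict_apply_univ] using
    generalized_counting_lemma_general H (fun v => volume.restrict (F v))
      (fun e => (Wf e).isUnitWeight_toSym2) (fun e => (Wf' e).isUnitWeight_toSym2)
      (c := fun e => cutNorm fun x y => (Wf e).W x y - (Wf' e).W x y)
      fun u w _ => (Wf s(u, w)).isCutBound_sub_cutNorm (Wf' s(u, w))
        (hFmeas u) (hFmeas w) (hFsub u) (hFsub w)

end
end
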